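/- arXiv:math/0012040 — 3 statements merged into one kernel-verified Lean document; each statement's English description precedes it below -/
import Mathlib

section
/- Let F = (f_1, f_2) be a multigerm in ℂ^n (n ≥ 2) both of whose components are regular. Then F is stably A-equivalent to one of the following multigerms: ((t,0),(0,t)), or ((t,0),(t,t^k)) for some integer k ≥ 2. -/
/-!
Both normal forms lie in the plane of the first two coordinates of `ℂ^d`, and no stabilization is
needed: the two multigerms are already `A`-equivalent in `ℂ^d`. It is enough to find an analytic
map `M : (ℂ², 0) → (ℂ^d, 0)` with injective differential at `0` that carries the planar normal form
to `F` up to reparametrization. By linear algebra and the inverse function theorem `M` extends to a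
biholomorphism germ of `ℂ^d` (`exists_biholoGerm_extending`), whose inverse is the required
coordinate change (`stablyAEquiv_of_parametrization`).

* If the tangent vectors of `F 0` and `F 1` are linearly independent, `M (x, y) = F 0 x + F 1 y`
  works and the normal form is `((t, 0), (0, t))`.
* If they are proportional, choose a linear functional `l` equal to `1` on the tangent vector of
  `F 0`. Both curves can be reparametrized to `f`, `g` with `l (f t) = l (g t) = t`
  (`exists_graph_parametrization`). Then `f` and `g` have the same tangent vector, and `g - f` is
  not identically zero because the images meet only at the origin. Hence `g t - f t = t ^ k • q t`
  with `k ≥ 2` and `q 0 ≠ 0`. Since `l (q 0) = 0`, the vectors `f' 0` and `q 0` are linearly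
  independent, so `M (x, y) = f x + y • q x` has injective differential; it carries `(t, 0)` to
  `f t` and `(t, t ^ k)` to `g t`.
-/

open scoped Topology

namespace CurveSing

/-- Pad a curve in `ℂ^d` to a curve in `ℂ^n` by appending zero coordinates. -/
def pad (d n : ℕ) (f : ℂ → Fin d → ℂ) : ℂ → Fin n → ℂ :=
  fun t j => if hj : (j : ℕ) < d then f t ⟨(j : ℕ), hj⟩ else 0

/-- The curve `t ↦ (0,…,0,t,0,…,0)` (the `i`-th coordinate axis of `ℂ^n`). -/
def axis (n i : ℕ) : ℂ → Fin n → ℂ := fun t j => if (j : ℕ) = i then t else 0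

/-- The multigerm consisting of the `n` coordinate axes of `ℂ^n`. -/
def Gn (n : ℕ) : Fin n → ℂ → Fin n → ℂ := fun i => axis n (i : ℕ)

/-- A (representative of a) curve germ in `ℂ^n`. -/
def IsCurveGerm (n : ℕ) (f : ℂ → Fin n → ℂ) : Prop :=
  AnalyticAt ℂ f 0 ∧ f 0 = 0

/-- A multigerm with `k` components in `ℂ^n`: each component is a curve germ and the
images of sufficiently small representatives of distinct components meet only at `0`. -/
def IsMultigerm (n k : ℕ) (F : Fin k → ℂ → Fin n → ℂ) : Prop :=
  (∀ i, IsCurveGerm n (F i)) ∧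
  ∃ ε > (0 : ℝ), ∀ i j : Fin k, i ≠ j → ∀ s t : ℂ,
    ‖s‖ < ε → ‖t‖ < ε → F i s = F j t → F i s = 0

/-- A germ of a biholomorphism `(E,0) → (E,0)`. -/
def IsBiholoGerm {E : Type*} [NormedAddCommGroup E] [NormedSpace ℂ E] (g : E → E) : Prop :=
  AnalyticAt ℂ g 0 ∧ g 0 = 0 ∧
  ∃ g' : E → E, AnalyticAt ℂ g' 0 ∧ g' 0 = 0 ∧
    (∀ᶠ x in 𝓝 (0 : E), g' (g x) = x) ∧ (∀ᶠ x in 𝓝 (0 : E), g (g' x) = x)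

/-- `A`-equivalence of multigerms with `k` components in `ℂ^n`. -/
def AEquiv (n k : ℕ) (F F' : Fin k → ℂ → Fin n → ℂ) : Prop :=
  ∃ g : (Fin n → ℂ) → Fin n → ℂ, IsBiholoGerm g ∧
    ∃ h : Fin k → ℂ → ℂ, (∀ i, IsBiholoGerm (h i)) ∧
      ∀ i, (fun t => g (F i t)) =ᶠ[𝓝 (0 : ℂ)] fun t => F' i (h i t)

/-- Stable `A`-equivalence: the two multigerms become `A`-equivalent after the standard
inclusions into a common `ℂ^N`. -/
def StablyAEquiv (n n' k : ℕ) (F : Fin k → ℂ → Fin n → ℂ)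
    (F' : Fin k → ℂ → Fin n' → ℂ) : Prop :=
  ∃ N, n ≤ N ∧ n' ≤ N ∧
    AEquiv N k (fun i => pad n N (F i)) (fun i => pad n' N (F' i))

/-- The `m`-jet of a curve, recorded as the tuple of iterated derivatives at `0`
of orders `0,…,m` (this determines and is determined by the degree-`m` Taylor
polynomial at `0`). -/
noncomputable def jet (n m : ℕ) (f : ℂ → Fin n → ℂ) : Fin (m + 1) → Fin n → ℂ :=
  fun i => iteratedDeriv (i : ℕ) f 0

/-- The `m`-jet of a multigerm. -/
noncomputable def jetF (n k m : ℕ) (F : Fin k → ℂ → Fin n → ℂ) : Fin k → Fin (m + 1) → Fin n → ℂ :=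
  fun i => jet n m (F i)

/-- A multigerm is simple if some neighbourhood of one of its jets meets only finitely
many `A`-equivalence classes of multigerms. -/
def Simple (n k : ℕ) (F : Fin k → ℂ → Fin n → ℂ) : Prop :=
  ∃ m : ℕ, ∃ U : Set (Fin k → Fin (m + 1) → Fin n → ℂ), IsOpen U ∧ jetF n k m F ∈ U ∧
    ∃ (N : ℕ) (R : Fin N → Fin k → ℂ → Fin n → ℂ),
      ∀ G : Fin k → ℂ → Fin n → ℂ, IsMultigerm n k G → jetF n k m G ∈ U →
        ∃ i, AEquiv n k G (R i)

/-- A curve germ is regular if its derivative at `0` does not vanish. -/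
def IsRegular (n : ℕ) (f : ℂ → Fin n → ℂ) : Prop := deriv f 0 ≠ 0

/-- `F` is stably `A`-equivalent to the pair with first component the regular curve
`(t,0,…,0)` and second component `g` (a curve in `ℂ^{d'}`). -/
def PairNF (d : ℕ) (F : Fin 2 → ℂ → Fin d → ℂ) (d' : ℕ) (g : ℂ → Fin d' → ℂ) : Prop :=
  StablyAEquiv d d' 2 F ![axis d' 0, g]

end CurveSing

namespace CurveSing

/-- The analytic inverse function theorem, in terms of germs. -/
theorem isBiholoGerm_of_hasFDerivAt {E : Type*} [NormedAddCommGroup E] [NormedSpace ℂ E]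
    [CompleteSpace E] {g : E → E} (hg : AnalyticAt ℂ g 0) (h0 : g 0 = 0) (L : E ≃L[ℂ] E)
    (hL : HasFDerivAt g (L : E →L[ℂ] E) 0) : IsBiholoGerm g := by
  have hs : HasStrictFDerivAt g (L : E →L[ℂ] E) 0 := hL.fderiv ▸ hg.hasStrictFDerivAt
  refine ⟨hg, h0, hs.localInverse g L 0, ?_, ?_, hs.eventually_left_inverse, ?_⟩
  · have := (hs.toOpenPartialHomeomorph g).analyticAt_symm' (i := L) (a := 0)
      hs.mem_toOpenPartialHomeomorph_source hg hL.fderiv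
    rw [HasStrictFDerivAt.toOpenPartialHomeomorph_coe, h0] at this
    exact this
  · simpa [h0] using hs.localInverse_apply_image
  · simpa [h0] using hs.eventually_right_inverse

theorem isBiholoGerm_of_hasDerivAt {g : ℂ → ℂ} (hg : AnalyticAt ℂ g 0) (h0 : g 0 = 0) {c : ℂ}
    (hc : c ≠ 0) (hd : HasDerivAt g c 0) : IsBiholoGerm g := by
  refine isBiholoGerm_of_hasFDerivAt hg h0 (.unitsEquivAut ℂ (.mk0 c hc))
    (hd.hasFDerivAt.congr_fderiv ?_)
  ext
  simp

/-- The inclusion of `ℂ²` into `ℂ^d` as the plane of the first two coordinates. -/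
def plane (d : ℕ) (hd : 2 ≤ d) : ℂ × ℂ →ₗ[ℂ] Fin d → ℂ :=
  (LinearMap.single ℂ (fun _ : Fin d => ℂ) ⟨0, by lia⟩).coprod
    (LinearMap.single ℂ (fun _ : Fin d => ℂ) ⟨1, by lia⟩)

/-- The projection of `ℂ^d` onto its first two coordinates. -/
def proj₂ (d : ℕ) (hd : 2 ≤ d) : (Fin d → ℂ) →ₗ[ℂ] ℂ × ℂ :=
  (LinearMap.proj ⟨0, by lia⟩).prod (LinearMap.proj ⟨1, by lia⟩)

theorem proj₂_plane (d : ℕ) (hd : 2 ≤ d) (z : ℂ × ℂ) : proj₂ d hd (plane d hd z) = z := by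
  ext <;> simp [proj₂, plane]

theorem pad_two (d : ℕ) (hd : 2 ≤ d) (a b : ℂ → ℂ) (t : ℂ) :
    pad 2 d (fun t => ![a t, b t]) t = plane d hd (a t, b t) := by
  ext ⟨j, hj⟩
  match j with
  | 0 => simp [pad, plane]
  | 1 => simp [pad, plane]
  | j + 2 => simp [pad, plane]

theorem pad_self (d : ℕ) (f : ℂ → Fin d → ℂ) : pad d d f = f := by
  ext t j
  simp [pad]

/-- An analytic immersion germ `ℂ² → ℂ^d` is the restriction to the coordinate plane of a
biholomorphism germ of `ℂ^d`. With `P` the projection to the first two coordinates, `J` the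
inclusion of the plane and `L` a linear automorphism such that `L ∘ J = M'`, the extension is
`x ↦ M (P x) + L (x - J (P x))`, whose differential at `0` is `L`. -/
theorem exists_biholoGerm_extending {d : ℕ} (hd : 2 ≤ d) {M : ℂ × ℂ → Fin d → ℂ}
    (hM : AnalyticAt ℂ M 0) (h0 : M 0 = 0) {M' : ℂ × ℂ →L[ℂ] Fin d → ℂ}
    (hM' : HasFDerivAt M M' 0) (hinj : Function.Injective M') :
    ∃ Φ : (Fin d → ℂ) → Fin d → ℂ, IsBiholoGerm Φ ∧ ∀ z, Φ (plane d hd z) = M z := by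
  have hp : Function.Injective (plane d hd) :=
    Function.LeftInverse.injective (proj₂_plane d hd)
  obtain ⟨L, hL⟩ := Submodule.exists_linearEquiv_restrict_eq
    ((LinearEquiv.ofInjective _ hp).symm ≪≫ₗ LinearEquiv.ofInjective M'.toLinearMap hinj)
  have hLp : ∀ z, L (plane d hd z) = M' z := by
    intro z
    simpa using (hL (LinearEquiv.ofInjective _ hp z)).symm
  let P : (Fin d → ℂ) →L[ℂ] ℂ × ℂ := LinearMap.toContinuousLinearMap (proj₂ d hd)
  let J : ℂ × ℂ →L[ℂ] (Fin d → ℂ) := LinearMap.toContinuousLinearMap (plane d hd)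
  let Lc : (Fin d → ℂ) ≃L[ℂ] (Fin d → ℂ) := L.toContinuousLinearEquiv
  let R : (Fin d → ℂ) →L[ℂ] (Fin d → ℂ) :=
    (Lc : (Fin d → ℂ) →L[ℂ] (Fin d → ℂ)) ∘L (.id ℂ _ - J ∘L P)
  have hP0 : P 0 = 0 := map_zero P
  refine ⟨fun x => M (P x) + R x, isBiholoGerm_of_hasFDerivAt ?_ ?_ Lc ?_, fun z => ?_⟩
  · exact (AnalyticAt.comp (by rwa [hP0]) (P.analyticAt 0)).add (R.analyticAt 0)
  · simp [h0]
  · have h1 : HasFDerivAt (fun x => M (P x) + R x) (M' ∘L P + R) 0 :=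
      (HasFDerivAt.comp (0 : Fin d → ℂ) (by rwa [hP0]) P.hasFDerivAt).add R.hasFDerivAt
    refine h1.congr_fderiv (ContinuousLinearMap.ext fun x => ?_)
    have : L (plane d hd (proj₂ d hd x)) = M' (proj₂ d hd x) := hLp _
    simp [R, Lc, P, J, this]
  · simp [R, P, J, proj₂_plane]

/-- If an immersion germ `M` carries the planar curves `t ↦ (a i t, b i t)` to the components
`F i`, up to reparametrizations `h i`, then `F` is equivalent to the pair of planar curves. -/
theorem stablyAEquiv_of_parametrization {d : ℕ} (hd : 2 ≤ d) {F : Fin 2 → ℂ → Fin d → ℂ}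
    {a b : Fin 2 → ℂ → ℂ} (ha : ∀ i, ContinuousAt (a i) 0) (hb : ∀ i, ContinuousAt (b i) 0)
    (ha0 : ∀ i, a i 0 = 0) (hb0 : ∀ i, b i 0 = 0)
    {M : ℂ × ℂ → Fin d → ℂ}
    (hM : AnalyticAt ℂ M 0) (h0 : M 0 = 0) {M' : ℂ × ℂ →L[ℂ] Fin d → ℂ}
    (hM' : HasFDerivAt M M' 0) (hinj : Function.Injective M')
    {h : Fin 2 → ℂ → ℂ} (hh : ∀ i, IsBiholoGerm (h i))
    (hF : ∀ i, ∀ᶠ t in 𝓝 0, F i t = M (a i (h i t), b i (h i t))) :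
    StablyAEquiv d 2 2 F fun i t => ![a i t, b i t] := by
  obtain ⟨Φ, ⟨hΦ, hΦ0, Ψ, hΨ, hΨ0, hΨΦ, hΦΨ⟩, hΦM⟩ := exists_biholoGerm_extending hd hM h0 hM' hinj
  refine ⟨d, le_rfl, hd, Ψ, ⟨hΨ, hΨ0, Φ, hΦ, hΦ0, hΦΨ, hΨΦ⟩, h, hh, fun i => ?_⟩
  have hc : Filter.Tendsto (fun t => plane d hd (a i (h i t), b i (h i t))) (𝓝 0) (𝓝 0) := by
    have h1 : Filter.Tendsto (h i) (𝓝 0) (𝓝 0) := by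
      simpa [ContinuousAt, (hh i).2.1] using (hh i).1.continuousAt
    have h2 : Filter.Tendsto (a i) (𝓝 0) (𝓝 0) := by simpa [ContinuousAt, ha0] using ha i
    have h3 : Filter.Tendsto (b i) (𝓝 0) (𝓝 0) := by simpa [ContinuousAt, hb0] using hb i
    have h4 : Filter.Tendsto (plane d hd) (𝓝 ((0 : ℂ), (0 : ℂ))) (𝓝 0) := by
      have := (plane d hd).continuous_of_finiteDimensional.tendsto 0
      rwa [map_zero] at this
    exact h4.comp ((h2.comp h1).prodMk_nhds (h3.comp h1))
  filter_upwards [hF i, hc.eventually hΨΦ] with t ht ht'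
  rw [pad_self, pad_two d hd, ht, ← hΦM, ht']

theorem injective_of_linearIndependent {E : Type*} [AddCommGroup E] [Module ℂ E] {u v : E}
    (h : LinearIndependent ℂ ![u, v]) :
    Function.Injective fun z : ℂ × ℂ => z.1 • u + z.2 • v := by
  rintro ⟨x, y⟩ ⟨x', y'⟩ hz
  obtain ⟨h1, h2⟩ := LinearIndependent.pair_iff.1 h (x - x') (y - y') (by
    simp only at hz
    rw [← sub_eq_zero] at hz
    rw [← hz]
    module)
  ext
  · exact sub_eq_zero.1 h1
  · exact sub_eq_zero.1 h2

/-- A curve germ `f` whose tangent vector is not killed by the linear functional `l` can be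
parametrized by the value of `l`. The last clause records that the new parametrization `f₁` is `f`
composed with a change of parameter `k`, so that its small values are values of `f` at small
parameters. -/
theorem exists_graph_parametrization {d : ℕ} {f : ℂ → Fin d → ℂ} (hf : IsCurveGerm d f)
    (l : (Fin d → ℂ) →L[ℂ] ℂ) (hl : l (deriv f 0) ≠ 0) :
    ∃ (h : ℂ → ℂ) (f₁ : ℂ → Fin d → ℂ), IsBiholoGerm h ∧ AnalyticAt ℂ f₁ 0 ∧ f₁ 0 = 0 ∧
      HasDerivAt f₁ ((l (deriv f 0))⁻¹ • deriv f 0) 0 ∧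
      (∀ᶠ t in 𝓝 0, f t = f₁ (h t)) ∧ (∀ᶠ t in 𝓝 0, l (f₁ t) = t) ∧
      ∃ k : ℂ → ℂ, Filter.Tendsto k (𝓝 0) (𝓝 0) ∧ f₁ = f ∘ k := by
  have hd : HasDerivAt (fun t => l (f t)) (l (deriv f 0)) 0 :=
    l.hasFDerivAt.comp_hasDerivAt 0 hf.1.differentiableAt.hasDerivAt
  have hb : IsBiholoGerm fun t => l (f t) :=
    isBiholoGerm_of_hasDerivAt ((l.analyticAt _).comp hf.1) (by simp [hf.2]) hl hd
  obtain ⟨ha, h0, k, hk, hk0, hkl, hlk⟩ := id hb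
  have hkt : Filter.Tendsto k (𝓝 0) (𝓝 0) := by
    simpa [ContinuousAt, hk0] using hk.continuousAt
  have hkd : HasDerivAt k (l (deriv f 0))⁻¹ 0 := by
    refine HasDerivAt.of_local_left_inverse (f := fun t => l (f t)) hk.continuousAt ?_ hl hlk
    simpa [hk0] using hd
  refine ⟨_, f ∘ k, hb, AnalyticAt.comp (by simpa [hk0] using hf.1) hk, by simp [hk0, hf.2], ?_,
    ?_, hlk, k, hkt, rfl⟩
  · refine HasDerivAt.scomp (𝕜 := ℂ) 0 ?_ hkd
    simpa [hk0] using hf.1.differentiableAt.hasDerivAt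
  · filter_upwards [hkl] with t ht
    simp [ht]

theorem transverse_case {d : ℕ} (hd : 2 ≤ d) {F : Fin 2 → ℂ → Fin d → ℂ}
    (hF : ∀ i, IsCurveGerm d (F i)) (hli : LinearIndependent ℂ ![deriv (F 0) 0, deriv (F 1) 0]) :
    StablyAEquiv d 2 2 F ![fun t => ![t, 0], fun t => ![(0 : ℂ), t]] := by
  have key := stablyAEquiv_of_parametrization hd (F := F)
    (a := ![fun t => t, fun _ => 0]) (b := ![fun _ => 0, fun t => t])
    (M := fun z => F 0 z.1 + F 1 z.2)
    (M' := (ContinuousLinearMap.fst ℂ ℂ ℂ).smulRight (deriv (F 0) 0) +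
      (ContinuousLinearMap.snd ℂ ℂ ℂ).smulRight (deriv (F 1) 0))
    (h := fun _ t => t)
    (by simp [Fin.forall_fin_two, continuousAt_id', continuousAt_const])
    (by simp [Fin.forall_fin_two, continuousAt_id', continuousAt_const])
    (by simp [Fin.forall_fin_two]) (by simp [Fin.forall_fin_two])
    ?_ (by simp [(hF _).2]) ?_ (injective_of_linearIndependent hli) ?_
    (by simp [Fin.forall_fin_two, (hF _).2])
  · convert key using 1
    ext i
    fin_cases i <;> rfl
  · exact ((hF 0).1.comp (f := Prod.fst) (x := (0 : ℂ × ℂ)) analyticAt_fst).add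
      ((hF 1).1.comp (f := Prod.snd) (x := (0 : ℂ × ℂ)) analyticAt_snd)
  · have h0 := (hF 0).1.differentiableAt.hasDerivAt.hasFDerivAt.comp (0 : ℂ × ℂ)
      (hasFDerivAt_fst (𝕜 := ℂ))
    have h1 := (hF 1).1.differentiableAt.hasDerivAt.hasFDerivAt.comp (0 : ℂ × ℂ)
      (hasFDerivAt_snd (𝕜 := ℂ))
    refine (h0.add h1).congr_fderiv (ContinuousLinearMap.ext fun z => ?_)
    simp
  · exact fun _ => ⟨analyticAt_id, rfl, id, analyticAt_id, rfl, by simp, by simp⟩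

theorem tangent_case {d : ℕ} (hd : 2 ≤ d) {F : Fin 2 → ℂ → Fin d → ℂ}
    (hF : IsMultigerm d 2 F) (hreg : IsRegular d (F 0)) {c : ℂ} (hc : c ≠ 0)
    (hcd : deriv (F 1) 0 = c • deriv (F 0) 0) :
    ∃ k : ℕ, 2 ≤ k ∧ StablyAEquiv d 2 2 F ![fun t => ![t, 0], fun t => ![t, t ^ k]] := by
  obtain ⟨hg, ε, hε, hint⟩ := hF
  obtain ⟨l, hl⟩ := SeparatingDual.exists_eq_one (R := ℂ) hreg
  obtain ⟨h₀, f, hh₀, hf, hf0, hf', hFf, hlf, k₀, hk₀, rfl⟩ :=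
    exists_graph_parametrization (hg 0) l (by simp [hl])
  obtain ⟨h₁, g, hh₁, hgan, hg0, hg', hFg, hlg, k₁, hk₁, rfl⟩ :=
    exists_graph_parametrization (hg 1) l (by simp [hcd, hl, hc])
  -- `f` and `g` are the two components, both parametrized by `l`; their tangent vectors agree.
  set u := deriv (F 0) 0
  set f := F 0 ∘ k₀
  set g := F 1 ∘ k₁
  have hw' : HasDerivAt (g - f) 0 0 := by
    have := hg'.sub hf'
    rwa [hcd, map_smul, hl, smul_smul, smul_eq_mul, mul_one, inv_mul_cancel₀ hc, inv_one,
      sub_self] at this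
  have hwan : AnalyticAt ℂ (g - f) 0 := hgan.sub hf
  -- If `f = g` near `0`, the images of the components meet away from the origin.
  have hne : ¬ ∀ᶠ t in 𝓝 0, (g - f) t = 0 := by
    intro hz
    have hball : ∀ᶠ t : ℂ in 𝓝 0, ‖t‖ < ε := by
      filter_upwards [Metric.ball_mem_nhds (0 : ℂ) hε] with t ht
      simpa using ht
    have hev : ∀ᶠ t : ℂ in 𝓝 0, t = 0 := by
      filter_upwards [hz, hk₀.eventually hball, hk₁.eventually hball, hlf] with t ht h0 h1 hlt
      have := hint 0 1 (by simp) (k₀ t) (k₁ t) h0 h1 (sub_eq_zero.1 ht).symm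
      rw [← hlt]
      simp [f, this]
    obtain ⟨t, ht, ht'⟩ := ((hev.filter_mono nhdsWithin_le_nhds).and
      (self_mem_nhdsWithin (a := (0 : ℂ)) (s := {0}ᶜ))).exists
    exact ht' ht
  obtain ⟨k, q, hq, hq0, hwq⟩ := hwan.exists_eventuallyEq_pow_smul_nonzero_iff.2 hne
  simp only [sub_zero] at hwq
  have hk : 2 ≤ k := by
    match k with
    | 0 =>
      have := hwq.self_of_nhds
      simp [hg0, hf0] at this
      exact absurd this.symm hq0
    | 1 =>
      have h1 : HasDerivAt (fun t : ℂ => t ^ 1 • q t) (q 0) 0 := by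
        simpa using (hasDerivAt_id' (0 : ℂ)).fun_smul hq.differentiableAt.hasDerivAt
      exact absurd ((h1.congr_of_eventuallyEq hwq).unique hw') hq0
    | k + 2 => lia
  -- `t ^ k * l (q t) = l (g t) - l (f t) = 0`, so `l ∘ q` vanishes off `0`, hence also at `0`.
  have hlq : l (q 0) = 0 := by
    have hne0 : ∀ᶠ t in 𝓝[≠] (0 : ℂ), l (q t) = 0 := by
      filter_upwards [hlf.filter_mono nhdsWithin_le_nhds, hlg.filter_mono nhdsWithin_le_nhds,
        hwq.filter_mono nhdsWithin_le_nhds, self_mem_nhdsWithin] with t h1 h2 h3 h4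
      have h5 := congrArg l h3
      simp only [Pi.sub_apply, map_sub, h1, h2, sub_self, map_smul, smul_eq_mul] at h5
      exact (mul_eq_zero.1 h5.symm).resolve_left (pow_ne_zero k h4)
    have hlim : Filter.Tendsto (fun t => l (q t)) (𝓝[≠] 0) (𝓝 (l (q 0))) :=
      ((l.continuous.continuousAt).comp hq.continuousAt).tendsto.mono_left nhdsWithin_le_nhds
    exact tendsto_nhds_unique hlim (tendsto_const_nhds.congr' (hne0.mono fun _ h => h.symm))
  have hli : LinearIndependent ℂ ![u, q 0] := by
    refine LinearIndependent.pair_iff.2 fun s t hst => ?_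
    have hs : s = 0 := by simpa [hl, hlq] using congrArg l hst
    subst hs
    simpa [hq0] using hst
  have hfu : HasDerivAt f u 0 := by simpa [hl] using hf'
  refine ⟨k, hk, ?_⟩
  have hgq : ∀ᶠ t in 𝓝 0, g t = f t + t ^ k • q t := by
    filter_upwards [hwq] with t ht
    rw [← ht]
    simp
  have hh₁t : Filter.Tendsto h₁ (𝓝 0) (𝓝 0) := by
    simpa [ContinuousAt, hh₁.2.1] using hh₁.1.continuousAt
  have key := stablyAEquiv_of_parametrization hd (F := F)
    (a := ![fun t => t, fun t => t]) (b := ![fun _ => 0, fun t => t ^ k])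
    (M := fun z => f z.1 + z.2 • q z.1)
    (M' := (ContinuousLinearMap.fst ℂ ℂ ℂ).smulRight u +
      (ContinuousLinearMap.snd ℂ ℂ ℂ).smulRight (q 0))
    (h := ![h₀, h₁])
    (by simp [Fin.forall_fin_two, continuousAt_id'])
    (by simp [Fin.forall_fin_two, continuousAt_const, (continuous_pow k).continuousAt])
    (by simp [Fin.forall_fin_two]) (by simp [Fin.forall_fin_two]; lia)
    ?_ (by simp [hf0]) ?_ (injective_of_linearIndependent hli)
    (by simp [Fin.forall_fin_two, hh₀, hh₁]) ?_
  · convert key using 1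
    ext i
    fin_cases i <;> rfl
  · exact (hf.comp (f := Prod.fst) (x := (0 : ℂ × ℂ)) analyticAt_fst).add
      (analyticAt_snd.smul (hq.comp (f := Prod.fst) (x := (0 : ℂ × ℂ)) analyticAt_fst))
  · have h0 := hfu.hasFDerivAt.comp (0 : ℂ × ℂ) (hasFDerivAt_fst (𝕜 := ℂ))
    have h1 := hq.differentiableAt.hasDerivAt.hasFDerivAt.comp (0 : ℂ × ℂ)
      (hasFDerivAt_fst (𝕜 := ℂ))
    have h2 := (hasFDerivAt_snd (𝕜 := ℂ) (p := (0 : ℂ × ℂ))).smul h1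
    refine (h0.add h2).congr_fderiv (ContinuousLinearMap.ext fun z => ?_)
    simp
  · rw [Fin.forall_fin_two]
    constructor
    · filter_upwards [hFf] with t ht
      simpa using ht
    · filter_upwards [hFg, hh₁t.eventually hgq] with t ht ht'
      simpa [ht'] using ht

end CurveSing

open CurveSing in
/-- Any multigerm in `ℂ^n` (`n ≥ 2`) with two regular components is stably
`A`-equivalent to `((t,0),(0,t))` or to `((t,0),(t,t^k))` for some `k ≥ 2`. -/
theorem pair_of_regular_components (d : ℕ) (hd : 2 ≤ d) (F : Fin 2 → ℂ → Fin d → ℂ)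
    (hF : IsMultigerm d 2 F) (hreg : ∀ i, IsRegular d (F i)) :
    StablyAEquiv d 2 2 F ![fun t => ![t, 0], fun t => ![(0 : ℂ), t]] ∨
    ∃ k : ℕ, 2 ≤ k ∧ StablyAEquiv d 2 2 F ![fun t => ![t, 0], fun t => ![t, t ^ k]] := by
  by_cases hli : LinearIndependent ℂ ![deriv (F 0) 0, deriv (F 1) 0]
  · exact Or.inl (transverse_case hd hF.1 hli)
  · right
    rw [LinearIndependent.pair_iff' (hreg 0)] at hli
    push Not at hli
    obtain ⟨c, hc⟩ := hli
    refine tangent_case hd hF (hreg 0) (c := c) ?_ hc.symm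
    rintro rfl
    exact hreg 1 (by simpa using hc.symm)
end

section
/- Let F = (f_1, f_2) be a multigerm in ℂ^n (n ≥ 3) with f_1 = (t,0,…,0) and with the 8-jet of f_2 equal to (t³, t⁶, t⁷, 0, …, 0). Then F is not simple. -/
/-!
The pairs consisting of the first axis and a curve `X` with
`X ≡ (t³, t⁶ + a t⁸, t⁷ + c t⁸, 0, …, 0)` modulo `t⁹` carry the modulus `a / c²`, and every value
of it occurs arbitrarily close to `F`, because `F` itself has `a = c = 0`.

Suppose a diffeomorphism `g` and a reparametrization `h` carry the pair with parameters `(a, c)` to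
the one with `(a', c')`. Comparing first coordinates, `h³ = α t³ + O(t⁶)`, so `h = u t + O(t⁴)` with
`u ≠ 0` (`biholo_normal_form`). As `g` preserves the first axis and `X` is at distance `O(t⁶)` from
its projection to that axis, while `X = O(t³)`, a mean value estimate (`exists_quadratic_bound`)
shows that modulo `t⁹` the other coordinates of `g ∘ X` are given by the linear part of `g` applied
to `(t⁶ + a t⁸, t⁷ + c t⁸)`. Comparing the coefficients of `t⁶`, `t⁷`, `t⁸` in the second and third
coordinates gives `a = a' u²` and `c = c' u`; with `c = c' ≠ 0` this forces `u = 1` and `a = a'`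
(`modulus_invariant`).

Adding `t⁸ (0, a, c, 0, …, 0)` to the second component of `F`, with a fixed small `c ≠ 0` and
infinitely many small `a`, therefore produces infinitely many classes in any neighbourhood of any
jet of `F`. Since equivalence to a common representative implies equivalence
(`AEquiv.of_common`), finitely many representatives cannot suffice.
-/

open scoped Topology

namespace CurveSing

open Asymptotics Filter

/-! ### Coefficient comparison -/

lemma isBigO_pow_smul {E : Type*} [NormedAddCommGroup E] [NormedSpace ℂ E] {r : ℂ → E}
    (hr : ContinuousAt r 0) (n : ℕ) :
    (fun t : ℂ => t ^ n • r t) =O[𝓝 0] fun t => t ^ n := by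
  have := (isBigO_refl (fun t : ℂ => t ^ n) (𝓝 0)).smul (hr.isBigO_one ℂ)
  simpa using this

lemma isBigO_pow_mul {r : ℂ → ℂ} (hr : ContinuousAt r 0) (n : ℕ) :
    (fun t : ℂ => t ^ n * r t) =O[𝓝 0] fun t => t ^ n :=
  isBigO_pow_smul hr n

lemma isBigO_pow_pow {m n : ℕ} (h : m ≤ n) :
    (fun t : ℂ => t ^ n) =O[𝓝 0] fun t : ℂ => t ^ m := by
  obtain ⟨k, rfl⟩ := Nat.exists_eq_add_of_le h
  have := isBigO_pow_mul (r := fun t => t ^ k) (by fun_prop) m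
  simpa only [pow_add] using this

lemma coeff_zero_of_isBigO {c : ℂ} {n : ℕ}
    (h : (fun t : ℂ => c * t ^ n) =O[𝓝 0] fun t => t ^ (n + 1)) : c = 0 := by
  obtain ⟨C, hC⟩ := h.bound
  have hlim : Tendsto (fun t : ℂ => C * ‖t‖) (𝓝[≠] 0) (𝓝 0) := by
    have : Tendsto (fun t : ℂ => C * ‖t‖) (𝓝 0) (𝓝 (C * ‖(0 : ℂ)‖)) := by
      apply Continuous.tendsto; fun_prop
    simpa using this.mono_left nhdsWithin_le_nhds
  have hle : ∀ᶠ t : ℂ in 𝓝[≠] 0, ‖c‖ ≤ C * ‖t‖ := by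
    filter_upwards [hC.filter_mono nhdsWithin_le_nhds, self_mem_nhdsWithin] with t ht ht0
    have hpos : 0 < ‖t‖ ^ n := pow_pos (norm_pos_iff.mpr ht0) n
    simp only [norm_mul, norm_pow] at ht
    refine le_of_mul_le_mul_right ?_ hpos
    calc ‖c‖ * ‖t‖ ^ n ≤ C * ‖t‖ ^ (n + 1) := ht
      _ = C * ‖t‖ * ‖t‖ ^ n := by ring
  have := ge_of_tendsto hlim hle
  simpa using this

lemma coeffs_zero_of_isBigO {c₀ c₁ c₂ : ℂ} {n : ℕ}
    (h : (fun t : ℂ => c₀ * t ^ n + c₁ * t ^ (n + 1) + c₂ * t ^ (n + 2))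
      =O[𝓝 0] fun t => t ^ (n + 3)) : c₀ = 0 ∧ c₁ = 0 ∧ c₂ = 0 := by
  have h0 : c₀ = 0 := by
    refine coeff_zero_of_isBigO (n := n) ?_
    have h' := h.trans (isBigO_pow_pow (show n + 1 ≤ n + 3 by omega))
    have h'' := isBigO_pow_mul (r := fun t => c₁ + c₂ * t) (by fun_prop) (n + 1)
    exact (h'.sub h'').congr_left fun t => by ring
  subst h0
  have h1 : c₁ = 0 := by
    refine coeff_zero_of_isBigO (n := n + 1) ?_
    have h' := h.trans (isBigO_pow_pow (show n + 2 ≤ n + 3 by omega))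
    have h'' := isBigO_pow_mul (r := fun _ => c₂) (by fun_prop) (n + 2)
    exact (h'.sub h'').congr_left fun t => by ring
  subst h1
  refine ⟨rfl, rfl, coeff_zero_of_isBigO (n := n + 2) ?_⟩
  exact h.congr_left fun t => by ring

/-! ### Second-order estimate for the target diffeomorphism -/

/-- Near `0`, for `‖y‖ ≤ ‖x‖`, the remainder of the linear approximation of `g` is bounded
by a constant times
`‖x‖ * ‖x - y‖`: the derivative of `g` deviates from its value at `0` by `O(‖x‖)` on the ball of
radius `‖x‖`. -/
lemma exists_quadratic_bound {E : Type*} [NormedAddCommGroup E] [NormedSpace ℂ E]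
    [CompleteSpace E] {g : E → E} (hg : AnalyticAt ℂ g 0) :
    ∃ C : ℝ, ∀ᶠ x in 𝓝 (0 : E), ∀ y, ‖y‖ ≤ ‖x‖ →
      ‖g x - g y - fderiv ℂ g 0 (x - y)‖ ≤ C * ‖x‖ * ‖x - y‖ := by
  obtain ⟨C, hC⟩ := (hg.fderiv.differentiableAt.isBigO_sub).bound
  refine ⟨C, ?_⟩
  obtain ⟨ρ, hρ, hball⟩ := Metric.eventually_nhds_iff.mp (hC.and hg.eventually_analyticAt)
  refine Metric.eventually_nhds_iff.mpr ⟨ρ, hρ, fun x hx y hy => ?_⟩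
  simp only [dist_zero_right, sub_zero] at hball hx
  have hC0 : x ≠ 0 → 0 ≤ C := fun hx0 => by
    have := (norm_nonneg _).trans (hball hx).1
    exact nonneg_of_mul_nonneg_left this (norm_pos_iff.mpr hx0)
  rcases eq_or_ne x 0 with rfl | hx0
  · have : y = 0 := by simpa using hy
    simp [this]
  let : NormedSpace ℝ E := NormedSpace.restrictScalars ℝ ℂ E
  refine Convex.norm_image_sub_le_of_norm_fderiv_le' (𝕜 := ℂ)
    (s := Metric.closedBall (0 : E) ‖x‖) ?_ ?_ (convex_closedBall _ _) (by simpa using hy) (by simp)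
  · intro z hz
    have hz : ‖z‖ ≤ ‖x‖ := by simpa using hz
    exact (hball (hz.trans_lt hx)).2.differentiableAt
  · intro z hz
    have hz : ‖z‖ ≤ ‖x‖ := by simpa using hz
    exact (hball (hz.trans_lt hx)).1.trans (mul_le_mul_of_nonneg_left hz (hC0 hx0))

/-! ### Biholomorphism germs -/

lemma IsBiholoGerm.tendsto_zero {E : Type*} [NormedAddCommGroup E] [NormedSpace ℂ E] {g : E → E}
    (hg : IsBiholoGerm g) : Tendsto g (𝓝 0) (𝓝 0) := by
  have := hg.1.continuousAt.tendsto
  rwa [hg.2.1] at this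

lemma IsBiholoGerm.comp {E : Type*} [NormedAddCommGroup E] [NormedSpace ℂ E] {g k : E → E}
    (hg : IsBiholoGerm g) (hk : IsBiholoGerm k) : IsBiholoGerm (g ∘ k) := by
  have hgc := hg.tendsto_zero
  have hkc := hk.tendsto_zero
  obtain ⟨ga, g0, g', ga', g0', hl, hr⟩ := hg
  obtain ⟨ka, k0, k', ka', k0', kl, kr⟩ := hk
  have hg'c : Tendsto g' (𝓝 0) (𝓝 0) := by simpa only [g0'] using ga'.continuousAt.tendsto
  have hk'c : Tendsto k' (𝓝 0) (𝓝 0) := by simpa only [k0'] using ka'.continuousAt.tendsto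
  refine ⟨AnalyticAt.comp (by rwa [k0]) ka, by simp [k0, g0], k' ∘ g',
    AnalyticAt.comp (by rwa [g0']) ga', by simp [k0', g0'], ?_, ?_⟩
  · filter_upwards [kl, hkc.eventually hl] with x h1 h2
    simp [h2, h1]
  · filter_upwards [hr, hg'c.eventually kr] with x h1 h2
    simp [h2, h1]

lemma IsBiholoGerm.exists_inv {E : Type*} [NormedAddCommGroup E] [NormedSpace ℂ E] {g : E → E}
    (hg : IsBiholoGerm g) : ∃ g' : E → E, IsBiholoGerm g' ∧
      (∀ᶠ x in 𝓝 (0 : E), g' (g x) = x) ∧ (∀ᶠ x in 𝓝 (0 : E), g (g' x) = x) := by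
  obtain ⟨ga, g0, g', ga', g0', hl, hr⟩ := hg
  exact ⟨g', ⟨ga', g0', g, ga, g0, hr, hl⟩, hl, hr⟩

/-- Two multigerms equivalent to a common `R` are equivalent to each other. Nothing is assumed
about `R`: its germs are determined by those of `G'`. -/
lemma AEquiv.of_common {n k : ℕ} {G G' R : Fin k → ℂ → Fin n → ℂ}
    (hG' : ∀ i, IsCurveGerm n (G' i)) (h : AEquiv n k G R) (h' : AEquiv n k G' R) :
    AEquiv n k G G' := by
  obtain ⟨g, hg, p, hp, he⟩ := h
  obtain ⟨γ, hγ, q, hq, he'⟩ := h'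
  obtain ⟨γ', hγ', hγl, -⟩ := hγ.exists_inv
  choose q' hq' _ hqr using fun i => (hq i).exists_inv
  refine ⟨γ' ∘ g, hγ'.comp hg, fun i => q' i ∘ p i, fun i => (hq' i).comp (hp i), fun i => ?_⟩
  have hc : Tendsto (fun t => q' i (p i t)) (𝓝 0) (𝓝 0) :=
    (hq' i).tendsto_zero.comp (hp i).tendsto_zero
  have hGc : Tendsto (G' i) (𝓝 0) (𝓝 0) := by
    simpa only [(hG' i).2] using (hG' i).1.continuousAt.tendsto
  filter_upwards [he i, (hp i).tendsto_zero.eventually (hqr i), hc.eventually (he' i),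
    (hGc.comp hc).eventually hγl] with t h1 h2 h3 h4
  simp only [Function.comp_apply] at h4 ⊢
  rw [h1, ← h4, h3, h2]

/-! ### The modulus -/

/-- The model curve `(t³, t⁶ + a t⁸, t⁷ + c t⁸, 0, …, 0)` in `ℂ^(n+3)`. -/
noncomputable def model (n : ℕ) (a c t : ℂ) : Fin (n + 3) → ℂ :=
  t ^ 3 • Pi.single 0 1 + (t ^ 6 + a * t ^ 8) • Pi.single 1 1 +
    (t ^ 7 + c * t ^ 8) • Pi.single 2 1

lemma two_ne_zero_fin (n : ℕ) : (2 : Fin (n + 3)) ≠ 0 :=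
  Fin.ne_of_val_ne (by rw [Fin.val_two]; simp)

lemma two_ne_one_fin (n : ℕ) : (2 : Fin (n + 3)) ≠ 1 :=
  Fin.ne_of_val_ne (by rw [Fin.val_two]; simp)

lemma model_zero (n : ℕ) (a c t : ℂ) : model n a c t 0 = t ^ 3 := by
  simp [model, (two_ne_zero_fin n).symm]

lemma model_one (n : ℕ) (a c t : ℂ) : model n a c t 1 = t ^ 6 + a * t ^ 8 := by
  simp [model, (two_ne_one_fin n).symm]

lemma model_two (n : ℕ) (a c t : ℂ) : model n a c t 2 = t ^ 7 + c * t ^ 8 := by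
  simp [model, two_ne_zero_fin n, two_ne_one_fin n]

lemma axis_eq (n : ℕ) (s : ℂ) : axis (n + 3) 0 s = s • Pi.single 0 1 := by
  ext j
  rcases eq_or_ne j 0 with rfl | hj
  · simp [axis]
  · have : (j : ℕ) ≠ 0 := fun h => hj (Fin.ext h)
    simp [axis, this, hj]

/-- A reparametrization `h` whose cube agrees with `α t³` up to order `5` has the form
`u t + O(t⁴)`: the coefficients of `t⁴` and `t⁵` in `h³` force the `t²` and `t³` terms of `h` to
vanish. -/
lemma biholo_normal_form {h : ℂ → ℂ} (hh : IsBiholoGerm h) {α : ℂ}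
    (hα : (fun t => h t ^ 3 - α * t ^ 3) =O[𝓝 0] fun t : ℂ => t ^ 6) :
    ∃ u : ℂ, u ≠ 0 ∧ ∃ r : ℂ → ℂ, AnalyticAt ℂ r 0 ∧ ∀ t, h t = t * (u + t ^ 3 * r t) := by
  obtain ⟨r, hr, hexp⟩ := hh.1.exists_eq_sum_add_pow_mul 4
  obtain ⟨u, v, w, hexp⟩ : ∃ u v w : ℂ, ∀ t, h t = u * t + v * t ^ 2 + w * t ^ 3 + t ^ 4 * r t := by
    refine ⟨iteratedDeriv 1 h 0, iteratedDeriv 2 h 0 / 2, iteratedDeriv 3 h 0 / 6, fun t => ?_⟩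
    rw [hexp]
    simp only [Finset.sum_range_succ, Finset.range_zero, Finset.sum_empty, iteratedDeriv_zero,
      hh.2.1, smul_eq_mul, Nat.factorial]
    push_cast
    ring
  have hrc := hr.continuousAt
  -- A vanishing linear term would make `t = h⁻¹ (h t)` of order `t²`.
  have hu : u ≠ 0 := by
    rintro rfl
    obtain ⟨h', hh', hl, -⟩ := hh.exists_inv
    have h1 : h' =O[𝓝 0] fun s => s := by
      simpa [hh'.2.1] using hh'.1.differentiableAt.isBigO_sub
    have h2 : h =O[𝓝 0] fun t : ℂ => t ^ 2 := by
      have := isBigO_pow_mul (r := fun t => v + w * t + t ^ 2 * r t) (by fun_prop) 2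
      exact this.congr_left fun t => by rw [hexp]; ring
    have h3 := (h1.comp_tendsto hh.tendsto_zero).trans h2
    have h4 : (fun t : ℂ => 1 * t ^ 1) =O[𝓝 0] fun t => t ^ (1 + 1) :=
      h3.congr' (hl.mono fun t ht => by simpa using ht) (Eventually.of_forall fun t => rfl)
    exact one_ne_zero (coeff_zero_of_isBigO h4)
  have hrem := isBigO_pow_mul (r := fun t => v ^ 3 + 6 * u * v * w + 3 * u ^ 2 * r t
      + t * (3 * u * w ^ 2 + 3 * v ^ 2 * w + 6 * u * v * r t)
      + t ^ 2 * (3 * v * w ^ 2 + 3 * v ^ 2 * r t + 6 * u * w * r t)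
      + t ^ 3 * (w ^ 3 + 6 * v * w * r t + 3 * u * r t ^ 2)
      + t ^ 4 * (3 * w ^ 2 * r t + 3 * v * r t ^ 2)
      + t ^ 5 * (3 * w * r t ^ 2) + t ^ 6 * r t ^ 3) (by fun_prop) 6
  obtain ⟨-, hv, hw⟩ := coeffs_zero_of_isBigO (n := 3) (c₀ := u ^ 3 - α) (c₁ := 3 * u ^ 2 * v)
    (c₂ := 3 * u ^ 2 * w + 3 * u * v ^ 2)
    ((hα.sub hrem).congr_left fun t => by rw [hexp]; ring)
  have hv : v = 0 := by simpa [hu] using hv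
  subst hv
  have hw : w = 0 := by simpa [hu] using hw
  subst hw
  exact ⟨u, hu, r, hr, fun t => by rw [hexp]; ring⟩

/-- In the pairs (axis, `X`) with `X ≡ (t³, t⁶ + a t⁸, t⁷ + c t⁸, 0, …)` modulo `t⁹` and a fixed
`c ≠ 0`, the coefficient `a` is an invariant of `A`-equivalence. -/
lemma modulus_invariant {n : ℕ} {a a' c : ℂ} (hc : c ≠ 0) {R R' : ℂ → Fin (n + 3) → ℂ}
    (hR : AnalyticAt ℂ R 0) (hR' : AnalyticAt ℂ R' 0)
    (heq : AEquiv (n + 3) 2 ![axis (n + 3) 0, fun t => model n a c t + t ^ 9 • R t]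
      ![axis (n + 3) 0, fun t => model n a' c t + t ^ 9 • R' t]) : a = a' := by
  obtain ⟨g, hg, hs, hhs, he⟩ := heq
  have he0 := he 0
  have he1 := he 1
  have hh0 := hhs 0
  have hh := hhs 1
  generalize hs 0 = k at *
  generalize hs 1 = h at *
  simp only [Matrix.cons_val_zero, Matrix.cons_val_one] at he0 he1
  set X : ℂ → Fin (n + 3) → ℂ := fun t => model n a c t + t ^ 9 • R t with hX
  have hRc := hR.continuousAt
  have hXc : ContinuousAt X 0 := by
    simp only [hX, model]; fun_prop
  have hX0 : X 0 = 0 := by simp [hX, model]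
  have hXt : Tendsto X (𝓝 0) (𝓝 0) := by simpa [hX0] using hXc.tendsto
  set L := fderiv ℂ g 0 with hL
  have hXO : X =O[𝓝 0] fun t : ℂ => t ^ 3 := by
    have := isBigO_pow_smul (r := fun t => Pi.single 0 1 + (t ^ 3 + a * t ^ 5) • Pi.single 1 1 +
      (t ^ 4 + c * t ^ 5) • Pi.single 2 1 + t ^ 6 • R t) (by fun_prop) 3
    refine this.congr_left fun t => ?_
    simp only [hX, model]
    module
  obtain ⟨C, hC⟩ := exists_quadratic_bound hg.1
  have hC := hXt.eventually hC
  have hhO : h =O[𝓝 0] fun t => t := by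
    simpa [hh.2.1] using hh.1.differentiableAt.isBigO_sub
  -- The error term of the target curve stays of order `9` after reparametrization.
  have hR9 (j : Fin (n + 3)) : (fun t => h t ^ 9 * R' (h t) j) =O[𝓝 0] fun t : ℂ => t ^ 9 := by
    have h1 : (fun s : ℂ => s ^ 9 * R' s j) =O[𝓝 0] fun s => s ^ 9 :=
      isBigO_pow_mul ((continuous_apply j).continuousAt.comp hR'.continuousAt) 9
    exact (h1.comp_tendsto hh.tendsto_zero).trans (hhO.pow 9)
  -- First coordinate: compare with the linear part of `g` modulo `t⁶`.
  have hfirst : (fun t => g (X t) - t ^ 3 • L (Pi.single 0 1)) =O[𝓝 0] fun t : ℂ => t ^ 6 := by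
    have h1 : (fun t => g (X t) - L (X t)) =O[𝓝 0] fun t : ℂ => t ^ 6 := by
      have h2 : (fun t => g (X t) - L (X t)) =O[𝓝 0] fun t => ‖X t‖ * ‖X t‖ := by
        refine IsBigO.of_bound C ?_
        filter_upwards [hC] with t ht
        have := ht 0 (by simp)
        rw [hg.2.1] at this
        simpa [mul_assoc] using this
      exact (h2.trans (hXO.norm_left.mul hXO.norm_left)).congr_right fun t => by ring
    have h2 := isBigO_pow_smul (r := fun t => L ((1 + a * t ^ 2) • Pi.single 1 1 +
      (t + c * t ^ 2) • Pi.single 2 1 + t ^ 3 • R t)) (by fun_prop) 6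
    refine (h1.add h2).congr_left fun t => ?_
    have : X t = t ^ 3 • Pi.single 0 1 + t ^ 6 • ((1 + a * t ^ 2) • Pi.single 1 1 +
      (t + c * t ^ 2) • Pi.single 2 1 + t ^ 3 • R t) := by
      simp only [hX, model]; module
    rw [this, map_add, map_smul L (t ^ 3), map_smul L (t ^ 6)]
    module
  -- The remaining coordinates: `g` maps the axis to itself, so only `L` matters modulo `t⁹`.
  have hrest : (fun t => g (X t) - g (axis (n + 3) 0 (X t 0)) -
      (t ^ 6 + a * t ^ 8) • L (Pi.single 1 1) - (t ^ 7 + c * t ^ 8) • L (Pi.single 2 1)) =O[𝓝 0] fun t : ℂ => t ^ 9 := by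
    have hsub (t : ℂ) : X t - axis (n + 3) 0 (X t 0) = (t ^ 6 + a * t ^ 8) • Pi.single 1 1 +
        (t ^ 7 + c * t ^ 8) • Pi.single 2 1 + t ^ 9 • (R t - R t 0 • Pi.single 0 1) := by
      rw [axis_eq]
      simp only [hX, Pi.add_apply, model_zero, Pi.smul_apply]
      simp only [model, smul_eq_mul]
      module
    have hR0 : ContinuousAt (fun t => R t 0) 0 := (continuous_apply _).continuousAt.comp hRc
    have hsubO : (fun t => X t - axis (n + 3) 0 (X t 0)) =O[𝓝 0] fun t : ℂ => t ^ 6 := by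
      have := isBigO_pow_smul (r := fun t => (1 + a * t ^ 2) • Pi.single 1 1 +
        (t + c * t ^ 2) • Pi.single 2 1 + t ^ 3 • (R t - R t 0 • Pi.single 0 1)) (by fun_prop) 6
      refine this.congr_left fun t => ?_
      rw [hsub]
      module
    have h1 : (fun t => g (X t) - g (axis (n + 3) 0 (X t 0)) - L (X t - axis (n + 3) 0 (X t 0)))
        =O[𝓝 0] fun t : ℂ => t ^ 9 := by
      have h2 : (fun t => g (X t) - g (axis (n + 3) 0 (X t 0)) -
          L (X t - axis (n + 3) 0 (X t 0))) =O[𝓝 0]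
          fun t => ‖X t‖ * ‖X t - axis (n + 3) 0 (X t 0)‖ := by
        refine IsBigO.of_bound C ?_
        filter_upwards [hC] with t ht
        have := ht (axis (n + 3) 0 (X t 0)) (by
          rw [axis_eq, norm_smul, Pi.norm_single, norm_one, mul_one]
          exact norm_le_pi_norm (X t) 0)
        simpa [mul_assoc] using this
      exact (h2.trans (hXO.norm_left.mul hsubO.norm_left)).congr_right fun t => by ring
    have h2 := isBigO_pow_smul (r := fun t => L (R t - R t 0 • Pi.single 0 1)) (by fun_prop) 9
    refine (h1.add h2).congr_left fun t => ?_
    rw [hsub, map_add, map_add, map_smul L (t ^ 9), map_smul L (t ^ 6 + a * t ^ 8),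
      map_smul L (t ^ 7 + c * t ^ 8)]
    module
  have hX0t : Tendsto (fun t => X t 0) (𝓝 0) (𝓝 0) := by
    exact ((continuous_apply (0 : Fin (n + 3))).tendsto (0 : Fin (n + 3) → ℂ)).comp hXt
  have hax := hX0t.eventually he0
  have hcoord : (fun t => h t ^ 3 - L (Pi.single 0 1) 0 * t ^ 3) =O[𝓝 0] fun t : ℂ => t ^ 6 := by
    have h1 := (isBigO_pi.mp hfirst) 0
    have h2 := (hR9 0).trans (isBigO_pow_pow (show 6 ≤ 9 by norm_num))
    refine (h1.sub h2).congr' ?_ EventuallyEq.rfl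
    filter_upwards [he1] with t ht
    change g (X t) = _ at ht
    simp only [ht, Pi.sub_apply, Pi.add_apply, Pi.smul_apply, model_zero, smul_eq_mul]
    ring
  obtain ⟨u, hu, r, hr, hhr⟩ := biholo_normal_form hh hcoord
  have hrc := hr.continuousAt
  have hpow (k : ℕ) : (fun t => h t ^ k - u ^ k * t ^ k) =O[𝓝 0] fun t : ℂ => t ^ (k + 3) := by
    have h1 : (fun s : ℂ => s ^ k - u ^ k) =O[𝓝 u] fun s => s - u :=
      (differentiableAt_pow (𝕜 := ℂ) (x := u) k).isBigO_sub
    have hlim : Tendsto (fun t => u + t ^ 3 * r t) (𝓝 0) (𝓝 u) := by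
      have : ContinuousAt (fun t => u + t ^ 3 * r t) 0 := by fun_prop
      simpa using this.tendsto
    have h2 : (fun t => (u + t ^ 3 * r t) ^ k - u ^ k) =O[𝓝 0] fun t : ℂ => t ^ 3 :=
      (h1.comp_tendsto hlim).trans
        ((isBigO_pow_mul hrc 3).congr_left fun t => by simp)
    refine ((isBigO_refl (fun t : ℂ => t ^ k) (𝓝 0)).mul h2).congr (fun t => ?_) fun t => ?_
    · rw [hhr, mul_pow]; ring
    · ring
  have hh8 := (hpow 8).trans (isBigO_pow_pow (show 9 ≤ 11 by norm_num))
  have hh7 := (hpow 7).trans (isBigO_pow_pow (show 9 ≤ 10 by norm_num))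
  have hone := (isBigO_pi.mp hrest) 1
  have htwo := (isBigO_pi.mp hrest) 2
  obtain ⟨p1, q1, e1⟩ := coeffs_zero_of_isBigO (n := 6)
    (c₀ := u ^ 6 - L (Pi.single 1 1) 1) (c₁ := - L (Pi.single 2 1) 1)
    (c₂ := a' * u ^ 8 - a * L (Pi.single 1 1) 1 - c * L (Pi.single 2 1) 1) (by
      refine ((((hone.sub (hR9 1)).sub (hpow 6)).sub (hh8.const_mul_left a'))).congr' ?_
        EventuallyEq.rfl
      filter_upwards [he1, hax] with t ht ht'
      change g (X t) = _ at ht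
      simp only [Pi.sub_apply, Pi.smul_apply, ht, ht', Pi.add_apply, model_one, smul_eq_mul, axis]
      simp
      ring)
  obtain ⟨p2, q2, e2⟩ := coeffs_zero_of_isBigO (n := 6)
    (c₀ := - L (Pi.single 1 1) 2) (c₁ := u ^ 7 - L (Pi.single 2 1) 2)
    (c₂ := c * u ^ 8 - a * L (Pi.single 1 1) 2 - c * L (Pi.single 2 1) 2) (by
      refine ((((htwo.sub (hR9 2)).sub hh7).sub (hh8.const_mul_left c))).congr' ?_
        EventuallyEq.rfl
      filter_upwards [he1, hax] with t ht ht'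
      change g (X t) = _ at ht
      simp only [Pi.sub_apply, Pi.smul_apply, ht, ht', Pi.add_apply, model_two, smul_eq_mul, axis,
        Fin.val_two]
      simp
      ring)
  -- The `t⁸` coefficients give `c u = c` and `a' u² = a`.
  have hu1 : u = 1 := by
    have : c * u ^ 7 * (u - 1) = 0 := by linear_combination e2 - a * p2 - c * q2
    simpa [hc, hu, sub_eq_zero] using this
  subst hu1
  linear_combination a * p1 + c * q1 - e1

/-! ### The family near `F` -/

lemma pad_eq_model (n : ℕ) :
    (pad 3 (n + 3) fun t : ℂ => ![t ^ 3, t ^ 6, t ^ 7]) = model n 0 0 := by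
  funext t j
  rcases lt_or_ge (j : ℕ) 3 with hj | hj
  · obtain rfl | rfl | rfl : j = 0 ∨ j = 1 ∨ j = 2 := by
      have hj' : (j : ℕ) = 0 ∨ (j : ℕ) = 1 ∨ (j : ℕ) = 2 := by omega
      exact hj'.imp (fun h => Fin.ext h) (Or.imp (fun h => Fin.ext h)
        fun h => Fin.ext (h.trans Fin.val_two.symm))
    · rw [model_zero]; simp [pad]
    · rw [model_one]; simp [pad]
    · rw [model_two]; simp only [pad, Fin.val_two]; simp
  · have h0 : j ≠ 0 := by rintro rfl; simp at hj
    have h1 : j ≠ 1 := by rintro rfl; simp at hj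
    have h2 : j ≠ 2 := by rintro rfl; rw [Fin.val_two] at hj; omega
    simp [pad, model, hj.not_gt, h0, h1, h2]

/-- The direction `(0, a, c, 0, …, 0)` of the perturbation `t⁸ • (0, a, c, 0, …, 0)`. -/
noncomputable def dir (n : ℕ) (a c : ℂ) : Fin (n + 3) → ℂ := a • Pi.single 1 1 + c • Pi.single 2 1

/-- The remainder `R` is the same for all `(a, c)`, so the family differs from `model` only by a
fixed term of order `9`. -/
lemma exists_remainder {n : ℕ} {f : ℂ → Fin (n + 3) → ℂ} (hf : AnalyticAt ℂ f 0)
    (hjet : jet (n + 3) 8 f = jet (n + 3) 8 (model n 0 0)) :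
    ∃ R : ℂ → Fin (n + 3) → ℂ, AnalyticAt ℂ R 0 ∧
      ∀ a c t, f t + t ^ 8 • dir n a c = model n a c t + t ^ 9 • R t := by
  have hm : AnalyticAt ℂ (model n 0 0) 0 := by
    unfold model; fun_prop
  obtain ⟨R₁, h₁, e₁⟩ := hf.exists_eq_sum_add_pow_mul 9
  obtain ⟨R₂, h₂, e₂⟩ := hm.exists_eq_sum_add_pow_mul 9
  refine ⟨R₁ - R₂, h₁.sub h₂, fun a c t => ?_⟩
  have hmodel : model n a c t = model n 0 0 t + t ^ 8 • dir n a c := by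
    simp only [model, dir]; module
  have hsum : ∑ i ∈ Finset.range 9, (t ^ i / (i.factorial : ℂ)) • iteratedDeriv i f 0 =
      ∑ i ∈ Finset.range 9, (t ^ i / (i.factorial : ℂ)) • iteratedDeriv i (model n 0 0) 0 := by
    refine Finset.sum_congr rfl fun i hi => ?_
    have := congrFun hjet ⟨i, Finset.mem_range.mp hi⟩
    simp only [jet] at this
    rw [this]
  rw [hmodel, e₁, e₂, hsum, Pi.sub_apply]
  module

lemma isMultigerm_pair {n : ℕ} {a c : ℂ} {R : ℂ → Fin (n + 3) → ℂ} (hR : AnalyticAt ℂ R 0) :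
    IsMultigerm (n + 3) 2 ![axis (n + 3) 0, fun t => model n a c t + t ^ 9 • R t] := by
  have hR1 : ContinuousAt (fun t => R t 1) 0 :=
    (continuous_apply _).continuousAt.comp hR.continuousAt
  have hne : ∀ᶠ t : ℂ in 𝓝 0, 1 + a * t ^ 2 + t ^ 3 * R t 1 ≠ 0 := by
    have : ContinuousAt (fun t => 1 + a * t ^ 2 + t ^ 3 * R t 1) 0 := by fun_prop
    exact this.eventually_ne (by simp)
  obtain ⟨ε, hε, hball⟩ := Metric.eventually_nhds_iff.mp hne
  simp only [dist_zero_right] at hball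
  -- The second coordinate of the second curve is `t⁶` times a unit, so the curve meets the axis
  -- only for `t = 0`.
  have hmeet : ∀ s t : ℂ, ‖t‖ < ε → axis (n + 3) 0 s = model n a c t + t ^ 9 • R t →
      model n a c t + t ^ 9 • R t = 0 := by
    intro s t ht hst
    have h1 := congrFun hst 1
    simp only [Pi.add_apply, model_one, Pi.smul_apply, smul_eq_mul] at h1
    have h2 : t ^ 6 * (1 + a * t ^ 2 + t ^ 3 * R t 1) = 0 := by
      have h3 : axis (n + 3) 0 s 1 = 0 := by simp [axis]
      rw [h3] at h1
      linear_combination -h1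
    have ht0 : t = 0 := by simpa [hball ht] using h2
    simp [ht0, model]
  refine ⟨fun i => ?_, ε, hε, fun i j hij s t hs ht hst => ?_⟩
  · fin_cases i
    · refine ⟨?_, ?_⟩
      · have : axis (n + 3) 0 = fun s : ℂ => s • (Pi.single 0 1 : Fin (n + 3) → ℂ) :=
          funext (axis_eq n)
        simp only [Fin.zero_eta, Matrix.cons_val_zero, this]
        fun_prop
      · simp [axis_eq]
    · refine ⟨?_, ?_⟩
      · simp only [Fin.mk_one, Matrix.cons_val_one, Matrix.cons_val_fin_one, model]
        fun_prop
      · simp [model]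
  · fin_cases i <;> fin_cases j
    · exact absurd rfl hij
    · exact hst.trans (hmeet s t ht hst)
    · exact hmeet t s hs hst.symm
    · exact absurd rfl hij

end CurveSing

open CurveSing in
/-- A pair whose second component has `8`-jet `(t³, t⁶, t⁷, 0, …, 0)` is not simple. -/
theorem not_simple_jet8_t3_t6_t7 (d : ℕ) (hd : 3 ≤ d) (F : Fin 2 → ℂ → Fin d → ℂ)
    (hF : IsMultigerm d 2 F) (h1 : F 0 = axis d 0)
    (h2 : jet d 8 (F 1) = jet d 8 (pad 3 d fun t => ![t ^ 3, t ^ 6, t ^ 7])) :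
    ¬ Simple d 2 F := by
  obtain ⟨n, rfl⟩ : ∃ n, d = n + 3 := ⟨d - 3, by omega⟩
  rw [pad_eq_model] at h2
  have hF1 : AnalyticAt ℂ (F 1) 0 := (hF.1 1).1
  obtain ⟨R, hR, hRe⟩ := exists_remainder hF1 h2
  rintro ⟨m, U, hU, hFU, N, S, hS⟩
  let G : ℂ → ℂ → Fin 2 → ℂ → Fin (n + 3) → ℂ := fun a c =>
    ![axis (n + 3) 0, fun t => model n a c t + t ^ 9 • R t]
  -- The jet of `G a c` is an affine function of `(a, c)` with value `jetF F` at the origin.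
  have hjet : ∀ a c, jetF (n + 3) 2 m (G a c) = jetF (n + 3) 2 m F +
      fun i (j : Fin (m + 1)) =>
        (if i = 1 then iteratedDeriv (j : ℕ) (fun t : ℂ => t ^ 8) 0 else 0) • dir n a c := by
    intro a c
    funext i j
    fin_cases i
    · simp [jetF, jet, G, h1]
    · have : G a c 1 = fun t => F 1 t + t ^ 8 • dir n a c := by
        funext t; simp [G, hRe]
      have h8 : AnalyticAt ℂ (fun t : ℂ => t ^ 8) 0 := by fun_prop
      have h9 : AnalyticAt ℂ (fun t : ℂ => t ^ 8 • dir n a c) 0 := by fun_prop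
      simp only [jetF, jet, Fin.mk_one, this, Pi.add_apply, if_true]
      rw [iteratedDeriv_fun_add hF1.contDiffAt h9.contDiffAt,
        iteratedDeriv_smul_const h8.contDiffAt]
  have hnear : ∀ᶠ p : ℂ × ℂ in 𝓝 0, jetF (n + 3) 2 m (G p.1 p.2) ∈ U := by
    have hcont : Continuous fun p : ℂ × ℂ => jetF (n + 3) 2 m (G p.1 p.2) := by
      simp only [hjet, dir]
      fun_prop
    refine hcont.continuousAt.eventually_mem (hU.mem_nhds ?_)
    rw [hjet]
    convert hFU
    ext
    simp [dir]
  obtain ⟨ε, hε, hball⟩ := Metric.eventually_nhds_iff.mp hnear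
  let c : ℂ := ((ε / 2 : ℝ) : ℂ)
  have hcn : ‖c‖ = ε / 2 := by simp [c, abs_of_pos hε]
  have hc : c ≠ 0 := norm_ne_zero_iff.mp (by rw [hcn]; positivity)
  let a : ℕ → ℂ := fun k => c / (k + 1)
  have ha : ∀ k, ‖a k‖ ≤ ε / 2 := by
    intro k
    have hk : ‖(k : ℂ) + 1‖ = k + 1 := by
      have : ((k : ℂ) + 1) = ((k + 1 : ℕ) : ℂ) := by push_cast; rfl
      rw [this, Complex.norm_natCast]; push_cast; rfl
    simp only [a, norm_div, hcn, hk]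
    exact div_le_self (by positivity) (by linarith [k.cast_nonneg (α := ℝ)])
  have hinj : Function.Injective a := by
    intro k l hkl
    have hk : (k : ℂ) + 1 ≠ 0 := Nat.cast_add_one_ne_zero k
    have hl : (l : ℂ) + 1 ≠ 0 := Nat.cast_add_one_ne_zero l
    simp only [a] at hkl
    rw [div_eq_div_iff hk hl] at hkl
    have := mul_left_cancel₀ hc hkl
    exact_mod_cast (add_right_cancel this).symm
  have hmulti : ∀ k, IsMultigerm (n + 3) 2 (G (a k) c) := fun k => isMultigerm_pair hR
  have hcls : ∀ k, ∃ i, AEquiv (n + 3) 2 (G (a k) c) (S i) := by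
    intro k
    refine hS _ (hmulti k) (hball (y := (a k, c)) ?_)
    rw [dist_zero_right, Prod.norm_def, max_lt_iff]
    exact ⟨(ha k).trans_lt (by linarith), by rw [hcn]; linarith⟩
  choose cls hcls using hcls
  obtain ⟨k, l, hkl, hcl⟩ := Finite.exists_ne_map_eq_of_infinite cls
  have heq := AEquiv.of_common (hmulti l).1 (hcls k) (hcl ▸ hcls l)
  exact hkl (hinj (modulus_invariant hc hR hR heq))
end

section
/- Let F = (f_1, f_2) be a multigerm in ℂ^n (n ≥ 4) with f_1 = (t,0,…,0) and with the 9-jet of f_2 equal to (t⁸, t⁵, t⁶, t⁷, 0, …, 0). Then F is not simple. -/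
/-!
A one-parameter family of pairwise inequivalent multigerms accumulates at `F`. Keep the first
component and replace the second one by
`f₂ + (e t⁹, 0, 0, c t⁹, 0, …, 0)`, where `e ≠ 0` is fixed and small and `c` varies (`pert`).
The claim is that `c` is an invariant of `A`-equivalence (`modulus_eq_of_aEquiv`); since every
neighbourhood of every jet of `F` contains infinitely many such members, finitely many classes
cannot suffice.

Suppose `g ∘ f = f' ∘ h` relates the second components of two members with parameters `c`, `c'`.
All curves involved are `O(t⁵)`, so the terms of `g` of order at least two contribute `O(t¹⁰)`, and
modulo `t¹⁰` only the linear part `A` of `g` matters (`analytic_comp_isBigO`). As `g` preserves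
the first axis, `A e₀` is a multiple of `e₀` (`fderiv_axis`); hence outside coordinate `0` the
curve `A f` is, modulo `t¹⁰`, a combination of `t⁵`, `t⁶` and `t⁷ + c t⁹`, and has no `t⁸` term.
Write `h(t) = p t + q t² + r t³ + …`, with `p ≠ 0`. The computation in `modulus_eq` reads:

* the `t⁸` coefficient of `h⁷ + c' h⁹` (coordinate `3`) is `7 p⁶ q`, so `q = 0`;
* the `t⁸` coefficient of `h⁶` (coordinate `2`) is then `6 p⁵ r`, so `r = 0`;
* in coordinate `0`, `h⁸ + e h⁹` must be a multiple of `t⁸ + e t⁹`, so `p⁸ e = p⁹ e` and `p = 1`;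
* in coordinate `3`, `h⁷ + c' h⁹` is a multiple of `t⁷ + c t⁹`, so `c' = c`.
-/

open scoped Topology

namespace CurveSing

open Filter Asymptotics

/-! ### Truncated Taylor expansions of functions of one variable -/

/-- `J2 u a b c` says that `u` has the Taylor expansion `a + b t + c t² + O(t³)` at `0`, with a
remainder of the form `t³ r(t)`, `r` continuous at `0`. -/
def J2 (u : ℂ → ℂ) (a b c : ℂ) : Prop :=
  ∃ r : ℂ → ℂ, ContinuousAt r 0 ∧ ∀ t, u t = a + b * t + c * t ^ 2 + t ^ 3 * r t

lemma J2.mul {u v : ℂ → ℂ} {a b c a' b' c' : ℂ} (hu : J2 u a b c) (hv : J2 v a' b' c') :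
    J2 (fun t => u t * v t) (a * a') (a * b' + b * a') (a * c' + b * b' + c * a') := by
  obtain ⟨r, hr, h⟩ := hu
  obtain ⟨s, hs, h'⟩ := hv
  refine ⟨fun t => (b * c' + c * b' + c * c' * t) + (a + b * t + c * t ^ 2) * s t
    + (a' + b' * t + c' * t ^ 2) * r t + t ^ 3 * r t * s t, by fun_prop, fun t => ?_⟩
  simp only [h, h']
  ring

lemma J2.pow {u : ℂ → ℂ} {a b c : ℂ} (hu : J2 u a b c) (n : ℕ) :
    J2 (fun t => u t ^ (n + 2)) (a ^ (n + 2)) ((n + 2) * a ^ (n + 1) * b)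
      ((n + 2) * a ^ (n + 1) * c + (n + 2) * (n + 1) / 2 * a ^ n * b ^ 2) := by
  induction n with
  | zero =>
    convert hu.mul hu using 1 <;> (try ext t) <;> (try push_cast) <;> ring
  | succ n ih =>
    convert ih.mul hu using 1 <;> (try ext t) <;> (try push_cast) <;> ring

/-- A remainder bound `O(t^(n+1))` kills the constant coefficient and passes to the quotient
by `t`. -/
lemma isBigO_step {a : ℂ} {q : ℂ → ℂ} (hq : ContinuousAt q 0) {n : ℕ}
    (h : (fun t => a + t * q t) =O[𝓝[≠] 0] fun t : ℂ => t ^ (n + 1)) :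
    a = 0 ∧ q =O[𝓝[≠] 0] fun t : ℂ => t ^ n := by
  have h0 : Tendsto (fun t : ℂ => t ^ (n + 1)) (𝓝[≠] 0) (𝓝 0) := by
    have : Tendsto (fun t : ℂ => t ^ (n + 1)) (𝓝 0) (𝓝 (0 ^ (n + 1))) :=
      (continuous_pow (n + 1)).tendsto 0
    simp only [ne_eq, Nat.add_eq_zero_iff, one_ne_zero, and_false, not_false_eq_true,
      zero_pow] at this
    exact this.mono_left nhdsWithin_le_nhds
  have h1 : Tendsto (fun t : ℂ => a + t * q t) (𝓝[≠] 0) (𝓝 (a + 0 * q 0)) := by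
    have : ContinuousAt (fun t : ℂ => a + t * q t) 0 := by fun_prop
    exact this.tendsto.mono_left nhdsWithin_le_nhds
  have ha : a = 0 := by
    have := tendsto_nhds_unique h1 (h.trans_tendsto h0)
    simpa using this
  refine ⟨ha, ?_⟩
  subst ha
  have h2 := (isBigO_refl (fun t : ℂ => t⁻¹) (𝓝[≠] 0)).mul h
  refine h2.congr' ?_ ?_
  · filter_upwards [self_mem_nhdsWithin] with t ht
    have : t ≠ 0 := ht
    field_simp
    ring
  · filter_upwards [self_mem_nhdsWithin] with t ht
    have : t ≠ 0 := ht
    field_simp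
    ring

/-- A function `t⁵ (a₀ + ⋯ + a₃ t³ + t⁴ R(t))` that is `O(t¹⁰)` has vanishing coefficients in
degrees `5` to `9`; the last of these is `R 0`. -/
lemma coeffs_eq_zero {φ R : ℂ → ℂ} {a₀ a₁ a₂ a₃ : ℂ} (hR : ContinuousAt R 0)
    (h : φ =O[𝓝[≠] 0] fun t : ℂ => t ^ 10)
    (hφ : ∀ t, φ t = t ^ 5 * (a₀ + a₁ * t + a₂ * t ^ 2 + a₃ * t ^ 3 + t ^ 4 * R t)) :
    a₀ = 0 ∧ a₁ = 0 ∧ a₂ = 0 ∧ a₃ = 0 ∧ R 0 = 0 := by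
  have h5 : (fun t => a₀ + t * (a₁ + t * (a₂ + t * (a₃ + t * R t))))
      =O[𝓝[≠] 0] fun t : ℂ => t ^ (4 + 1) := by
    have h2 := (isBigO_refl (fun t : ℂ => (t ^ 5)⁻¹) (𝓝[≠] 0)).mul h
    refine h2.congr' ?_ ?_
    · filter_upwards [self_mem_nhdsWithin] with t ht
      have : t ≠ 0 := ht
      rw [hφ]
      field_simp
      ring
    · filter_upwards [self_mem_nhdsWithin] with t ht
      have : t ≠ 0 := ht
      field_simp
  obtain ⟨h0, h4⟩ := isBigO_step (by fun_prop) h5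
  obtain ⟨h1, h3⟩ := isBigO_step (n := 3) (by fun_prop) h4
  obtain ⟨h2, h2'⟩ := isBigO_step (n := 2) (by fun_prop) h3
  obtain ⟨h3, h1'⟩ := isBigO_step (n := 1) (by fun_prop) h2'
  refine ⟨h0, h1, h2, h3, ?_⟩
  have hR0 : Tendsto R (𝓝[≠] 0) (𝓝 0) := by
    refine h1'.trans_tendsto ?_
    have : Tendsto (fun t : ℂ => t ^ 1) (𝓝 0) (𝓝 (0 ^ 1)) := (continuous_pow 1).tendsto 0
    rw [pow_one] at this
    exact this.mono_left nhdsWithin_le_nhds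
  exact tendsto_nhds_unique (hR.tendsto.mono_left nhdsWithin_le_nhds) hR0

/-! ### The invariant -/

/-- Two members of the family with the same `e ≠ 0` whose `9`-jets are matched by a
reparametrization `t ↦ t u(t)` and a linear map preserving the first axis have the same modulus.
The linear map enters through the coordinates `0`, `2`, `3` of the images of the basis vectors. -/
lemma modulus_eq {u : ℂ → ℂ} {p q r e c c' : ℂ} (hu : J2 u p q r) (hp : p ≠ 0) (he : e ≠ 0)
    {α a₀ b₀ k₀ a₂ b₂ k₂ a₃ b₃ k₃ : ℂ}
    (h0 : (fun t => ((t * u t) ^ 8 + e * (t * u t) ^ 9)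
      - ((t ^ 8 + e * t ^ 9) * α + t ^ 5 * a₀ + t ^ 6 * b₀ + (t ^ 7 + c * t ^ 9) * k₀))
      =O[𝓝[≠] 0] fun t : ℂ => t ^ 10)
    (h2 : (fun t => (t * u t) ^ 6
      - (t ^ 5 * a₂ + t ^ 6 * b₂ + (t ^ 7 + c * t ^ 9) * k₂))
      =O[𝓝[≠] 0] fun t : ℂ => t ^ 10)
    (h3 : (fun t => ((t * u t) ^ 7 + c' * (t * u t) ^ 9)
      - (t ^ 5 * a₃ + t ^ 6 * b₃ + (t ^ 7 + c * t ^ 9) * k₃))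
      =O[𝓝[≠] 0] fun t : ℂ => t ^ 10) :
    c' = c := by
  obtain ⟨r6, c6, e6⟩ := hu.pow 4
  obtain ⟨r7, c7, e7⟩ := hu.pow 5
  obtain ⟨r8, c8, e8⟩ := hu.pow 6
  obtain ⟨r9, c9, e9⟩ := hu.pow 7
  norm_num at e6 e7 e8 e9
  -- the `t⁸` coefficient of coordinate `3` forces the quadratic term of `t u(t)` to vanish
  obtain ⟨-, -, E1, E2, E3⟩ := coeffs_eq_zero (a₀ := -a₃) (a₁ := -b₃) (a₂ := p ^ 7 - k₃)
    (a₃ := 7 * p ^ 6 * q)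
    (R := fun t => (7 * p ^ 6 * r + 21 * p ^ 5 * q ^ 2) + t * r7 t
      + c' * (p ^ 9 + 9 * p ^ 8 * q * t + (9 * p ^ 8 * r + 36 * p ^ 7 * q ^ 2) * t ^ 2
        + t ^ 3 * r9 t) - c * k₃) (by fun_prop) h3
    (fun t => by simp only [mul_pow, e7, e9]; ring)
  have hq : q = 0 := by simpa [hp] using E2
  subst hq
  -- the `t⁸` coefficient of coordinate `2` forces the cubic term to vanish
  obtain ⟨-, -, -, E4, -⟩ := coeffs_eq_zero (a₀ := -a₂) (a₁ := p ^ 6 - b₂) (a₂ := - k₂)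
    (a₃ := 6 * p ^ 5 * r)
    (R := fun t => r6 t - c * k₂) (by fun_prop) h2
    (fun t => by simp only [mul_pow, e6]; ring)
  have hr : r = 0 := by simpa [hp] using E4
  subst hr
  -- comparing `t⁸` and `t⁹` in coordinate `0` normalizes the linear term, because `e ≠ 0`
  obtain ⟨-, -, E5, E6, E7⟩ := coeffs_eq_zero (a₀ := -a₀) (a₁ := -b₀) (a₂ := -k₀)
    (a₃ := p ^ 8 - α)
    (R := fun t => t ^ 2 * r8 t
      + e * (p ^ 9 + t ^ 3 * r9 t) - e * α - c * k₀) (by fun_prop) h0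
    (fun t => by simp only [mul_pow, e8, e9]; ring)
  have hk : k₀ = 0 := by simpa using E5
  have hα : α = p ^ 8 := (sub_eq_zero.mp E6).symm
  have hp1 : p = 1 := by
    have : e * p ^ 8 * (p - 1) = 0 := by
      have := E7
      simp only [hk, hα] at this
      linear_combination this
    simpa [he, hp, sub_eq_zero] using this
  subst hp1
  have hk3 : k₃ = 1 := by linear_combination -E1
  simp only [hk3] at E3
  linear_combination E3

/-- The basis vector `e_i` of `ℂ^d`. -/
def bv (d i : ℕ) : Fin d → ℂ := fun j => if (j : ℕ) = i then 1 else 0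

/-- The truncated second component
`(t⁸ + e t⁹, t⁵, t⁶, t⁷ + c t⁹, 0, …, 0)` of the one-parameter family. -/
def V (d : ℕ) (e c t : ℂ) : Fin d → ℂ :=
  (t ^ 8 + e * t ^ 9) • bv d 0 + t ^ 5 • bv d 1 + t ^ 6 • bv d 2 + (t ^ 7 + c * t ^ 9) • bv d 3

lemma pad_eq_V (d : ℕ) (t : ℂ) :
    pad 4 d (fun t => ![t ^ 8, t ^ 5, t ^ 6, t ^ 7]) t = V d 0 0 t := by
  ext j
  simp only [pad, V]
  obtain ⟨j, hj⟩ := j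
  by_cases h : j < 4
  · interval_cases j <;> simp [bv]
  · simp [h, bv, show j ≠ 0 by omega, show j ≠ 1 by omega, show j ≠ 2 by omega,
      show j ≠ 3 by omega]

lemma V_eq (d : ℕ) (e c t : ℂ) :
    V d e c t = V d 0 0 t + t ^ 9 • (e • bv d 0 + c • bv d 3) := by
  simp only [V]
  module

lemma V_isBigO (d : ℕ) (e c : ℂ) : V d e c =O[𝓝 0] fun t : ℂ => t ^ 5 := by
  have h : ∀ t, V d e c t = t ^ 5 • ((t ^ 3 + e * t ^ 4) • bv d 0 + bv d 1 + t • bv d 2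
      + (t ^ 2 + c * t ^ 4) • bv d 3) := by
    intro t
    simp only [V]
    module
  rw [show V d e c = _ from funext h]
  have hc : ContinuousAt (fun t : ℂ => ((t ^ 3 + e * t ^ 4) • bv d 0 + bv d 1 + t • bv d 2
      + (t ^ 2 + c * t ^ 4) • bv d 3)) 0 := by fun_prop
  simpa using (isBigO_refl (fun t : ℂ => t ^ 5) (𝓝 0)).smul (hc.isBigO_one ℂ)

/-! ### Passing from germs of maps to `9`-jets -/

/-- The quadratic and higher terms of an ambient biholomorphism do not affect the `9`-jet of a
curve of multiplicity `5`. -/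
lemma analytic_comp_isBigO {d : ℕ} {g : (Fin d → ℂ) → Fin d → ℂ} (hg : AnalyticAt ℂ g 0)
    (hg0 : g 0 = 0) {G W : ℂ → Fin d → ℂ} (hW : W =O[𝓝 0] fun t : ℂ => t ^ 5)
    (hG : (fun t => G t - W t) =O[𝓝 0] fun t : ℂ => t ^ 10) :
    (fun t => g (G t) - fderiv ℂ g 0 (W t)) =O[𝓝 0] fun t : ℂ => t ^ 10 := by
  have h510 : (fun t : ℂ => t ^ 10) =O[𝓝 0] fun t : ℂ => t ^ 5 :=
    (isLittleO_pow_pow (by norm_num)).isBigO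
  have hG5 : G =O[𝓝 0] fun t : ℂ => t ^ 5 := by
    simpa using (hG.trans h510).add hW
  have h5 : Tendsto (fun t : ℂ => t ^ 5) (𝓝 0) (𝓝 0) := by
    simpa using (continuous_pow (M := ℂ) 5).tendsto 0
  have hGt : Tendsto G (𝓝 0) (𝓝 0) := hG5.trans_tendsto h5
  obtain ⟨p, hp⟩ := hg
  have hA : (fun x => g x - fderiv ℂ g 0 x) =O[𝓝 0] fun x => ‖x‖ ^ 2 := by
    have := hp.isBigO_sub_partialSum_pow 2
    refine this.congr_left fun x => ?_
    simp only [FormalMultilinearSeries.partialSum, Finset.sum_range_succ, Finset.sum_range_zero]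
    rw [hp.fderiv_eq, hp.coeff_zero, hg0]
    simp
    congr 1
    funext i
    fin_cases i
    rfl
  have h1 : (fun t => g (G t) - fderiv ℂ g 0 (G t)) =O[𝓝 0] fun t : ℂ => t ^ 10 := by
    refine (hA.comp_tendsto hGt).trans ?_
    refine (hG5.norm_left.pow 2).congr_right fun t => by ring
  have h2 : (fun t => fderiv ℂ g 0 (G t - W t)) =O[𝓝 0] fun t : ℂ => t ^ 10 :=
    ((fderiv ℂ g 0).isBigO_comp _ _).trans hG
  refine (h1.add h2).congr_left fun t => ?_
  rw [map_sub]
  abel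

/-- A biholomorphism germ of `(ℂ, 0)` is `t u(t)` with `u(0) ≠ 0`. -/
lemma biholo_expansion {h : ℂ → ℂ} (hh : IsBiholoGerm h) :
    ∃ u p q r, J2 u p q r ∧ p ≠ 0 ∧ ∀ t, h t = t * u t := by
  obtain ⟨ha, h0, h', ha', h0', hl, -⟩ := hh
  obtain ⟨F, hFa, hF⟩ := ha.exists_eq_sum_add_pow_mul 4
  refine ⟨fun t => deriv h 0 + iteratedDeriv 2 h 0 / 2 * t + iteratedDeriv 3 h 0 / 6 * t ^ 2
    + t ^ 3 * F t, deriv h 0, iteratedDeriv 2 h 0 / 2, iteratedDeriv 3 h 0 / 6,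
    ⟨F, hFa.continuousAt, fun t => rfl⟩, ?_, fun t => ?_⟩
  · intro hd
    have e1 : HasDerivAt (fun t => h' (h t)) (deriv h' 0 * deriv h 0) 0 := by
      have h1 : HasDerivAt h' (deriv h' 0) (h 0) := by
        rw [h0]
        exact ha'.differentiableAt.hasDerivAt
      exact h1.comp 0 ha.differentiableAt.hasDerivAt
    have e2 := (hasDerivAt_id (0 : ℂ)).congr_of_eventuallyEq hl
    have := e1.unique e2
    simp [hd] at this
  · rw [hF t]
    simp [Finset.sum_range_succ, h0, Nat.factorial]
    ring

/-- The linear part of an ambient germ preserving the first axis maps `e₀` to a multiple of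
`e₀`. -/
lemma fderiv_axis {d : ℕ} {g : (Fin d → ℂ) → Fin d → ℂ} (hg : AnalyticAt ℂ g 0) {h : ℂ → ℂ}
    (H : (fun t => g (axis d 0 t)) =ᶠ[𝓝 (0 : ℂ)] fun t => axis d 0 (h t))
    (j : Fin d) (hj : (j : ℕ) ≠ 0) : fderiv ℂ g 0 (bv d 0) j = 0 := by
  have hax : ∀ t, axis d 0 t = t • bv d 0 := by
    intro t
    ext j
    simp [axis, bv]
  have h1 : HasDerivAt (fun t : ℂ => t • bv d 0) (bv d 0) 0 := by
    simpa using (hasDerivAt_id (0 : ℂ)).smul_const (bv d 0)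
  have h2 : HasFDerivAt g (fderiv ℂ g 0) ((0 : ℂ) • bv d 0) := by
    rw [zero_smul]
    exact hg.differentiableAt.hasFDerivAt
  have h3 := (hasDerivAt_pi.mp (h2.comp_hasDerivAt (0 : ℂ) h1)) j
  have h4 : (fun t : ℂ => g (t • bv d 0) j) =ᶠ[𝓝 0] fun _ => 0 := by
    filter_upwards [H] with t ht
    rw [← hax, ht]
    simp [axis, hj]
  exact h3.unique ((hasDerivAt_const (0 : ℂ) (0 : ℂ)).congr_of_eventuallyEq h4)

/-- Among multigerms with the first axis as first component and second component `V d e c` up to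
`O(t¹⁰)`, with `e ≠ 0` fixed, the parameter `c` is an invariant of `A`-equivalence. -/
lemma modulus_eq_of_aEquiv {d : ℕ} (hd : 4 ≤ d) {G G' : Fin 2 → ℂ → Fin d → ℂ} {e c c' : ℂ}
    (he : e ≠ 0) (hG0 : G 0 = axis d 0) (hG0' : G' 0 = axis d 0)
    (hG : (fun t => G 1 t - V d e c t) =O[𝓝 0] fun t : ℂ => t ^ 10)
    (hG' : (fun t => G' 1 t - V d e c' t) =O[𝓝 0] fun t : ℂ => t ^ 10)
    (H : AEquiv d 2 G G') : c' = c := by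
  obtain ⟨g, ⟨hga, hg0, -⟩, h, hh, heq⟩ := H
  have hax := heq 0
  rw [hG0, hG0'] at hax
  obtain ⟨u, p, q, r, hu, hp, hut⟩ := biholo_expansion (hh 1)
  have hht : Tendsto (h 1) (𝓝 0) (𝓝 0) := by
    simpa [(hh 1).2.1] using (hh 1).1.continuousAt.tendsto
  have hhO : h 1 =O[𝓝 0] fun t : ℂ => t := by
    have := ((hh 1).1.differentiableAt.hasDerivAt).isBigO_sub
    simpa [(hh 1).2.1] using this
  have k1 := analytic_comp_isBigO hga hg0 (V_isBigO d e c) hG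
  have k2 : (fun t => G' 1 (h 1 t) - V d e c' (h 1 t)) =O[𝓝 0] fun t : ℂ => t ^ 10 :=
    (hG'.comp_tendsto hht).trans (hhO.pow 10)
  have k3 : (fun t => V d e c' (h 1 t) - fderiv ℂ g 0 (V d e c t))
      =O[𝓝 0] fun t : ℂ => t ^ 10 := by
    refine (k1.sub k2).congr' ?_ EventuallyEq.rfl
    filter_upwards [heq 1] with t ht
    rw [ht]
    abel
  have k4 : ∀ j, (fun t => V d e c' (t * u t) j - ((t ^ 8 + e * t ^ 9) * fderiv ℂ g 0 (bv d 0) j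
      + t ^ 5 * fderiv ℂ g 0 (bv d 1) j + t ^ 6 * fderiv ℂ g 0 (bv d 2) j
      + (t ^ 7 + c * t ^ 9) * fderiv ℂ g 0 (bv d 3) j)) =O[𝓝[≠] 0] fun t : ℂ => t ^ 10 := by
    intro j
    refine ((isBigO_pi.mp k3 j).mono nhdsWithin_le_nhds).congr_left fun t => ?_
    rw [← hut t]
    simp [V]
  have a2 := fderiv_axis hga hax ⟨2, by omega⟩ (by simp)
  have a3 := fderiv_axis hga hax ⟨3, by omega⟩ (by simp)
  have h0 := k4 ⟨0, by omega⟩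
  have h2 := k4 ⟨2, by omega⟩
  have h3 := k4 ⟨3, by omega⟩
  rw [a2] at h2
  rw [a3] at h3
  simp only [V, bv, Pi.add_apply, Pi.smul_apply, smul_eq_mul, mul_zero, zero_add] at h0 h2 h3
  norm_num at h0 h2 h3
  exact modulus_eq (e := e) (c := c) (c' := c') hu hp he h0 h2 h3

/-- Two multigerms equivalent to a common tuple `R`, of which nothing is assumed, are equivalent
to each other. -/
lemma aEquiv_of_common {d k : ℕ} {G G' R : Fin k → ℂ → Fin d → ℂ}
    (hG' : ∀ i, IsCurveGerm d (G' i)) (H : AEquiv d k G R) (H' : AEquiv d k G' R) :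
    AEquiv d k G G' := by
  obtain ⟨g, ⟨ga, g0, gi, gia, gi0, gl, gr⟩, h, hh, heq⟩ := H
  obtain ⟨g₂, ⟨g₂a, g₂0, g₂i, g₂ia, g₂i0, g₂l, g₂r⟩, h₂, hh₂, heq₂⟩ := H'
  have tend : ∀ {E F : Type} [NormedAddCommGroup E] [NormedSpace ℂ E] [NormedAddCommGroup F]
      [NormedSpace ℂ F] {f : E → F}, AnalyticAt ℂ f 0 → f 0 = 0 → Tendsto f (𝓝 0) (𝓝 0) := by
    intro E F _ _ _ _ f hf h0
    simpa [h0] using hf.continuousAt.tendsto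
  have acomp : ∀ {E F K : Type} [NormedAddCommGroup E] [NormedSpace ℂ E] [NormedAddCommGroup F]
      [NormedSpace ℂ F] [NormedAddCommGroup K] [NormedSpace ℂ K] {f : F → K} {f' : E → F},
      AnalyticAt ℂ f 0 → AnalyticAt ℂ f' 0 → f' 0 = 0 → AnalyticAt ℂ (fun x => f (f' x)) 0 := by
    intro E F K _ _ _ _ _ _ f f' hf hf' h0
    exact AnalyticAt.fun_comp (by rwa [h0]) hf'
  have bcomp : ∀ {E : Type} [NormedAddCommGroup E] [NormedSpace ℂ E] {a ai b bi : E → E},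
      AnalyticAt ℂ a 0 → a 0 = 0 → AnalyticAt ℂ ai 0 → ai 0 = 0 → AnalyticAt ℂ b 0 → b 0 = 0 →
      AnalyticAt ℂ bi 0 → bi 0 = 0 → (∀ᶠ x in 𝓝 (0 : E), ai (a x) = x) →
      (∀ᶠ x in 𝓝 (0 : E), a (ai x) = x) → (∀ᶠ x in 𝓝 (0 : E), bi (b x) = x) →
      (∀ᶠ x in 𝓝 (0 : E), b (bi x) = x) → IsBiholoGerm (fun x => bi (a x)) := by
    intro E _ _ a ai b bi aa a0 aia ai0 ba b0 bia bi0 al ar bl br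
    refine ⟨acomp bia aa a0, by simp [a0, bi0], fun x => ai (b x), acomp aia ba b0,
      by simp [b0, ai0], ?_, ?_⟩
    · filter_upwards [(tend aa a0).eventually br, al] with x h1 h2
      rw [h1, h2]
    · filter_upwards [(tend ba b0).eventually ar, bl] with x h1 h2
      rw [h1, h2]
  choose ha h0 hi hia hi0 hl hr using hh
  choose h₂a h₂0 h₂i h₂ia h₂i0 h₂l h₂r using hh₂
  refine ⟨fun x => g₂i (g x), bcomp ga g0 gia gi0 g₂a g₂0 g₂ia g₂i0 gl gr g₂l g₂r,
    fun i t => h₂i i (h i t), fun i => bcomp (ha i) (h0 i) (hia i) (hi0 i) (h₂a i) (h₂0 i)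
      (h₂ia i) (h₂i0 i) (hl i) (hr i) (h₂l i) (h₂r i), fun i => ?_⟩
  have t1 : Tendsto (fun t => h₂i i (h i t)) (𝓝 0) (𝓝 0) :=
    (tend (h₂ia i) (h₂i0 i)).comp (tend (ha i) (h0 i))
  have t2 : Tendsto (fun t => G' i (h₂i i (h i t))) (𝓝 0) (𝓝 0) :=
    (tend (hG' i).1 (hG' i).2).comp t1
  filter_upwards [heq i, t1.eventually (heq₂ i), (tend (ha i) (h0 i)).eventually (h₂r i),
    t2.eventually g₂l] with t e1 e2 e3 e4
  rw [e1, ← e4, e2, e3]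

/-! ### The one-parameter family near `F` -/

/-- The perturbation of `F` obtained by adding `e t⁹` to coordinate `0` and `c t⁹` to
coordinate `3` of the second component. -/
def pert (d : ℕ) (F : Fin 2 → ℂ → Fin d → ℂ) (e c : ℂ) : Fin 2 → ℂ → Fin d → ℂ :=
  ![F 0, fun t => F 1 t + t ^ 9 • (e • bv d 0 + c • bv d 3)]

lemma pert_isBigO {d : ℕ} {F : Fin 2 → ℂ → Fin d → ℂ} (hF : IsMultigerm d 2 F)
    (h2 : jet d 9 (F 1) = jet d 9 (pad 4 d fun t => ![t ^ 8, t ^ 5, t ^ 6, t ^ 7])) (e c : ℂ) :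
    (fun t => pert d F e c 1 t - V d e c t) =O[𝓝 0] fun t : ℂ => t ^ 10 := by
  have hV : AnalyticAt ℂ (V d 0 0) 0 := by
    unfold V
    fun_prop
  have hD := (hF.1 1).1.fun_sub hV
  have hord : ((10 : ℕ) : ℕ∞) ≤ analyticOrderAt (fun t => F 1 t - V d 0 0 t) 0 := by
    rw [natCast_le_analyticOrderAt_iff_iteratedDeriv_eq_zero hD]
    intro i hi
    rw [iteratedDeriv_fun_sub (hF.1 1).1.contDiffAt hV.contDiffAt, sub_eq_zero]
    have := congrFun h2 ⟨i, hi⟩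
    rw [show (pad 4 d fun t => ![t ^ 8, t ^ 5, t ^ 6, t ^ 7]) = V d 0 0 from
      funext (pad_eq_V d)] at this
    exact this
  rw [natCast_le_analyticOrderAt hD] at hord
  obtain ⟨r, hr, hrt⟩ := hord
  have := (isBigO_refl (fun t : ℂ => t ^ 10) (𝓝 0)).smul (hr.continuousAt.isBigO_one ℂ)
  refine this.congr' ?_ (by simp)
  filter_upwards [hrt] with t ht
  rw [V_eq]
  simp only [pert, Matrix.cons_val_one, Matrix.cons_val_fin_one, add_sub_add_right_eq_sub, ht,
    sub_zero]

lemma pert_isMultigerm {d : ℕ} (hd : 4 ≤ d) {F : Fin 2 → ℂ → Fin d → ℂ}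
    (hF : IsMultigerm d 2 F) (h1 : F 0 = axis d 0)
    (h2 : jet d 9 (F 1) = jet d 9 (pad 4 d fun t => ![t ^ 8, t ^ 5, t ^ 6, t ^ 7])) (e c : ℂ) :
    IsMultigerm d 2 (pert d F e c) := by
  have hcg : ∀ i, IsCurveGerm d (pert d F e c i) := by
    intro i
    fin_cases i
    · exact hF.1 0
    · refine ⟨?_, ?_⟩
      · have := (hF.1 1).1
        simp only [pert]
        refine AnalyticAt.fun_add this ?_
        fun_prop
      · simp [pert, (hF.1 1).2]
  refine ⟨hcg, ?_⟩
  -- coordinate `1` of the second component is `t⁵ + O(t¹⁰)`, hence vanishes only at `t = 0`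
  have hO : (fun t => pert d F e c 1 t ⟨1, by omega⟩ - t ^ 5) =O[𝓝 0] fun t : ℂ => t ^ 10 := by
    refine (isBigO_pi.mp (pert_isBigO hF h2 e c) ⟨1, by omega⟩).congr_left fun t => ?_
    simp [V, bv]
  have hlo : (fun t : ℂ => t ^ 10) =o[𝓝 0] fun t : ℂ => t ^ 5 :=
    isLittleO_pow_pow (by norm_num)
  have hev := (hO.trans_isLittleO hlo).def (c := 1 / 2) (by norm_num)
  obtain ⟨ε, hε, hball⟩ := Metric.eventually_nhds_iff.mp hev
  have key : ∀ s t : ℂ, ‖t‖ < ε → axis d 0 s = pert d F e c 1 t → t = 0 := by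
    intro s t ht hst
    have := hball (y := t) (by simpa using ht)
    rw [← hst] at this
    simp only [axis, one_ne_zero, if_false, zero_sub, norm_neg] at this
    have h5 : ‖t ^ 5‖ = 0 := by linarith [norm_nonneg (t ^ 5)]
    simpa using h5
  refine ⟨ε, hε, ?_⟩
  intro i j hij s t hs ht hst
  have p0 : pert d F e c 0 = axis d 0 := h1
  fin_cases i <;> fin_cases j
  · exact absurd rfl hij
  · simp only [Fin.zero_eta, Fin.mk_one, p0] at hst ⊢
    have := key s t ht hst
    rw [hst, this]
    exact (hcg 1).2
  · simp only [Fin.zero_eta, Fin.mk_one, p0] at hst ⊢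
    have := key t s hs hst.symm
    rw [this]
    exact (hcg 1).2
  · exact absurd rfl hij

lemma continuous_jetF_pert {d : ℕ} {F : Fin 2 → ℂ → Fin d → ℂ} (hF : IsMultigerm d 2 F)
    (m : ℕ) : Continuous fun x : ℂ × ℂ => jetF d 2 m (pert d F x.1 x.2) := by
  refine continuous_pi fun i => continuous_pi fun k => ?_
  fin_cases i
  · exact (continuous_const : Continuous fun _ : ℂ × ℂ => iteratedDeriv (k : ℕ) (F 0) 0)
  · have : ∀ x : ℂ × ℂ, jetF d 2 m (pert d F x.1 x.2) 1 k = iteratedDeriv k (F 1) 0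
        + iteratedDeriv k (fun t : ℂ => t ^ 9) 0 • (x.1 • bv d 0 + x.2 • bv d 3) := by
      intro x
      simp only [jetF, jet, pert, Matrix.cons_val_one, Matrix.cons_val_fin_one]
      rw [iteratedDeriv_fun_add (hF.1 1).1.contDiffAt
        (by fun_prop), iteratedDeriv_smul_const (by fun_prop)]
    simp only [Fin.mk_one, this]
    fun_prop

lemma pert_zero {d : ℕ} (F : Fin 2 → ℂ → Fin d → ℂ) : pert d F 0 0 = F := by
  ext i t
  fin_cases i <;> simp [pert]

end CurveSing

open CurveSing in
/-- A pair whose second component has `9`-jet `(t⁸, t⁵, t⁶, t⁷, 0, …, 0)` is not simple. -/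
theorem not_simple_jet9_t8_t5_t6_t7 (d : ℕ) (hd : 4 ≤ d) (F : Fin 2 → ℂ → Fin d → ℂ)
    (hF : IsMultigerm d 2 F) (h1 : F 0 = axis d 0)
    (h2 : jet d 9 (F 1) = jet d 9 (pad 4 d fun t => ![t ^ 8, t ^ 5, t ^ 6, t ^ 7])) :
    ¬ Simple d 2 F := by
  rintro ⟨m, U, hU, hFU, N, R, hR⟩
  have hopen := hU.preimage (continuous_jetF_pert hF m)
  have hmem : ((0, 0) : ℂ × ℂ) ∈ (fun x : ℂ × ℂ => jetF d 2 m (pert d F x.1 x.2)) ⁻¹' U := by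
    simpa [pert_zero] using hFU
  obtain ⟨δ, hδ, hball⟩ := Metric.isOpen_iff.mp hopen _ hmem
  set e : ℂ := ((δ / 2 : ℝ) : ℂ) with he_def
  have he : e ≠ 0 := by
    rw [he_def, Complex.ofReal_ne_zero]
    positivity
  -- infinitely many moduli `c k` in the disc of radius `δ`, for a fixed `e`
  set c : ℕ → ℂ := fun k => ((δ / 2 / (k + 1) : ℝ) : ℂ) with hc_def
  have hin : ∀ k, jetF d 2 m (pert d F e (c k)) ∈ U := by
    intro k
    refine hball (a := (e, c k)) ?_
    have hle : δ / 2 / ((k : ℝ) + 1) ≤ δ / 2 :=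
      div_le_self (by positivity) (by linarith [Nat.cast_nonneg (α := ℝ) k])
    have hpos : 0 < δ / 2 / ((k : ℝ) + 1) := by positivity
    rw [Metric.mem_ball, Prod.dist_eq, max_lt_iff, dist_zero_right, dist_zero_right]
    simp only [he_def, hc_def, Complex.norm_real, Real.norm_eq_abs]
    rw [abs_of_pos hpos, abs_of_pos (by positivity)]
    constructor <;> linarith
  have hmg := pert_isMultigerm hd hF h1 h2 e
  choose i hi using fun k => hR _ (hmg (c k)) (hin k)
  obtain ⟨k, l, hkl, hikl⟩ := Finite.exists_ne_map_eq_of_infinite i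
  have hl := hi l
  rw [← hikl] at hl
  have hAE := aEquiv_of_common (hmg (c l)).1 (hi k) hl
  have hc := modulus_eq_of_aEquiv hd (G := pert d F e (c k)) (G' := pert d F e (c l)) he h1 h1
    (pert_isBigO hF h2 e (c k))
    (pert_isBigO hF h2 e (c l)) hAE
  rw [hc_def] at hc
  simp only [Complex.ofReal_inj] at hc
  have hk : (k : ℝ) + 1 ≠ 0 := by positivity
  have hl' : (l : ℝ) + 1 ≠ 0 := by positivity
  field_simp at hc
  apply hkl
  exact_mod_cast (add_right_cancel hc : (k : ℝ) = l)
end
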